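/- Let n ≥ 2 and 0 < λ ≤ Λ. There exist constants α₁ ∈ (0,1) and C > 0 depending only on n, λ, Λ with the following property: if u is bounded and continuous on the closure of B₁⁺, belongs to the viscosity Pucci class S(λ,Λ,0) in B₁⁺, and u = 0 on T₁, then there exists a ∈ ℝ with |a| ≤ C·‖u‖_{L∞(B₁⁺)} such that |u(x) − a·xₙ| ≤ C·|x|^{1+α₁}·‖u‖_{L∞(B₁⁺)} for all x ∈ B₁⁺ (pointwise boundary C^{1,α₁} regularity at a flat boundary). -/

import Mathlib

open MeasureTheory Set

noncomputable section

/-- Euclidean space `ℝⁿ`. -/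
abbrev EucSp (n : ℕ) := EuclideanSpace ℝ (Fin n)

/-- The last coordinate `xₙ` of a point `x ∈ ℝⁿ`. -/
def lastCoord (n : ℕ) (x : EucSp n) : ℝ :=
  if h : 0 < n then x ⟨n - 1, Nat.sub_lt h Nat.one_pos⟩ else 0

/-- The standard basis vector `eₙ`. -/
def lastBasis (n : ℕ) : EucSp n :=
  if h : 0 < n then EuclideanSpace.single ⟨n - 1, Nat.sub_lt h Nat.one_pos⟩ 1 else 0

/-- The norm `|x′|` of the horizontal part of `x = (x′, xₙ)`. -/
def primeNorm (n : ℕ) (x : EucSp n) : ℝ := ‖x - lastCoord n x • lastBasis n‖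

/-- The Hessian matrix `D²φ(x)` of a function `φ` at `x`. -/
def hessianMatrix (n : ℕ) (φ : EucSp n → ℝ) (x : EucSp n) : Matrix (Fin n) (Fin n) ℝ :=
  Matrix.of fun i j =>
    iteratedFDeriv ℝ 2 φ x ![EuclideanSpace.single i 1, EuclideanSpace.single j 1]

/-- `A` is a symmetric matrix with `λ I ≼ A ≼ Λ I` in the Loewner order. -/
def IsElliptic (n : ℕ) (lam Lam : ℝ) (A : Matrix (Fin n) (Fin n) ℝ) : Prop :=
  A.IsSymm ∧ (A - lam • (1 : Matrix (Fin n) (Fin n) ℝ)).PosSemidef ∧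
    ((Lam • (1 : Matrix (Fin n) (Fin n) ℝ)) - A).PosSemidef

/-- The viscosity Pucci class `S*(λ, Λ, f)` on an open set `U`. For `f = 0` this is
the class `S(λ, Λ, 0)`. -/
def InPucciStar (n : ℕ) (lam Lam : ℝ) (f : EucSp n → ℝ) (U : Set (EucSp n))
    (u : EucSp n → ℝ) : Prop :=
  ∀ φ : EucSp n → ℝ, ContDiff ℝ 2 φ →
    (∀ x ∈ U, IsLocalMaxOn (fun y => u y - φ y) U x →
      ∃ A : Matrix (Fin n) (Fin n) ℝ, IsElliptic n lam Lam A ∧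
        -|f x| ≤ (A * hessianMatrix n φ x).trace) ∧
    (∀ x ∈ U, IsLocalMinOn (fun y => u y - φ y) U x →
      ∃ A : Matrix (Fin n) (Fin n) ℝ, IsElliptic n lam Lam A ∧
        (A * hessianMatrix n φ x).trace ≤ |f x|)

/-- The `Lⁿ` norm `‖f‖_{Lⁿ(E)} = (∫_E |f|ⁿ)^{1/n}`. -/
def lnNorm (n : ℕ) (f : EucSp n → ℝ) (E : Set (EucSp n)) : ℝ :=
  (∫ x in E, |f x| ^ (n : ℝ)) ^ ((n : ℝ)⁻¹)

/-- A modulus of continuity: nonnegative, nondecreasing on `[0,∞)`, tending to `0` at `0⁺`. -/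
def IsModulus (ω : ℝ → ℝ) : Prop :=
  (∀ r, 0 ≤ ω r) ∧ MonotoneOn ω (Ici 0) ∧
    Filter.Tendsto ω (nhdsWithin 0 (Ioi 0)) (nhds 0)

/-- A Dini function: a modulus of continuity with `∫₀¹ ω(r)/r dr < ∞`. -/
def IsDini (ω : ℝ → ℝ) : Prop :=
  IsModulus ω ∧ IntegrableOn (fun r => ω r / r) (Ioc 0 1) volume

/-- The upper half ball `B_r⁺`. -/
def upperHalfBall (n : ℕ) (r : ℝ) : Set (EucSp n) :=
  {x | x ∈ Metric.ball (0 : EucSp n) r ∧ 0 < lastCoord n x}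

/-- The flat part `T_r = B_r ∩ {xₙ = 0}`. -/
def flatPart (n : ℕ) (r : ℝ) : Set (EucSp n) :=
  {x | x ∈ Metric.ball (0 : EucSp n) r ∧ lastCoord n x = 0}

/-!
The oscillation of the quotient `u / xₙ` decays geometrically at the origin. An exponential barrier
bounds `|u|` by a multiple of `xₙ` near the flat boundary, so that `a xₙ ≤ u ≤ b xₙ` on some half
ball. Both `u - a xₙ` and `b xₙ - u` are nonnegative and again in the Pucci class, and at points at
unit height one of them is comparable to `b - a` on half of a ball. By the weak Harnack inequality
that function is bounded below on a whole ball by a multiple of `b - a`, and a Hopf barrier carries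
the bound down to the flat boundary as a multiple of `(b - a) xₙ`. On a smaller half ball one of the
slopes `a`, `b` therefore improves by a fixed fraction of `b - a`, and iterating produces the limit
slope and the Hölder exponent.

The measure estimate behind the weak Harnack inequality comes from sliding paraboloids of fixed
opening up to the graph from below. Comparison with a quadratic barrier shows that the vertices of
two such paraboloids are no further apart than a multiple of the distance of their contact points,
if this is small. So the contact set has at least a fixed fraction of the measure of the set of
vertices, and a Vitali covering turns this into geometric growth of superlevel sets.
-/

section Supersolutions
open Metric Filter Topology
open scoped InnerProductSpace

variable {E : Type*} [NormedAddCommGroup E] [InnerProductSpace ℝ E]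

/-- Near `x`, the graph of `u` lies above the quadratic polynomial with value `u x`, gradient `p`
and Hessian `2 (e ⊗ e - d I)` at `x`. -/
def HasSubjet (u : E → ℝ) (x p e : E) (d : ℝ) : Prop :=
  ∀ᶠ y in 𝓝 x, u x + ⟪p, y - x⟫_ℝ + ⟪e, y - x⟫_ℝ ^ 2 - d * ‖y - x‖ ^ 2 ≤ u y

/-- Viscosity supersolutions on `U` of an extremal equation with constant right-hand side, in a form
tested only on Hessians `2 (e ⊗ e - d I)` with `d ≥ 0`. In dimension `n` and with `f = 0`, members
of the Pucci class with ellipticity constants `λ ≤ Λ` satisfy this for `K = n Λ / λ`. -/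
def PucciSupersolutionOn (K f : ℝ) (U : Set E) (u : E → ℝ) : Prop :=
  ∀ x ∈ U, ∀ (p e : E) (d : ℝ), 0 ≤ d → HasSubjet u x p e d → ‖e‖ ^ 2 ≤ K * (d + f)

/-- Functions that are touched from below at each point of `U` by a quadratic polynomial that
violates the condition in `PucciSupersolutionOn`. -/
def StrictPucciSubsolutionOn (K f : ℝ) (U : Set E) (φ : E → ℝ) : Prop :=
  ∀ x ∈ U, ∃ (p e : E) (d : ℝ), 0 ≤ d ∧ HasSubjet φ x p e d ∧ K * (d + f) < ‖e‖ ^ 2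

variable {K f : ℝ} {U V : Set E} {u φ : E → ℝ}

theorem HasSubjet.congr_add {v : E → ℝ} {x p p' e : E} {d d' : ℝ} (h : HasSubjet u x p e d)
    (hv : ∀ y, v y - v x = u y - u x + ⟪p' - p, y - x⟫_ℝ + (d - d') * ‖y - x‖ ^ 2) :
    HasSubjet v x p' e d' := by
  filter_upwards [h] with y hy
  have := hv y
  rw [inner_sub_left] at this
  linarith

theorem PucciSupersolutionOn.mono (h : PucciSupersolutionOn K f U u) (hVU : V ⊆ U) :
    PucciSupersolutionOn K f V u :=
  fun x hx => h x (hVU hx)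

theorem PucciSupersolutionOn.add_inner (h : PucciSupersolutionOn K f U u) (q : E) :
    PucciSupersolutionOn K f U fun x => u x + ⟪q, x⟫_ℝ := by
  intro x hx p e d hd hy
  refine h x hx (p - q) e d hd (hy.congr_add fun y => ?_)
  simp only [inner_sub_left, inner_sub_right]
  ring

theorem PucciSupersolutionOn.add_mul_norm_sub_sq (h : PucciSupersolutionOn K f U u) {a : ℝ}
    (ha : 0 ≤ a) (y₀ : E) :
    PucciSupersolutionOn K (f + a) U fun x => u x + a * ‖x - y₀‖ ^ 2 := by
  intro x hx p e d hd hy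
  have hle := h x hx (p - (2 * a) • (x - y₀)) e (d + a) (by positivity)
    (hy.congr_add fun y => ?_)
  · rwa [add_assoc, add_comm a f] at hle
  · rw [← sub_add_sub_cancel y x y₀, norm_add_sq_real]
    simp only [inner_sub_left, inner_smul_left, conj_trivial, real_inner_comm (x - y₀)]
    ring

theorem PucciSupersolutionOn.le_of_le_on_diff {T Ω : Set E} (hT : IsCompact T) (hΩ : IsOpen Ω)
    (hΩT : Ω ⊆ T) (hu : ContinuousOn u T) (hφ : ContinuousOn φ T)
    (hsuper : PucciSupersolutionOn K f Ω u) (hsub : StrictPucciSubsolutionOn K f Ω φ)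
    (hle : ∀ x ∈ T \ Ω, φ x ≤ u x) : ∀ x ∈ T, φ x ≤ u x := by
  by_contra! ⟨x₁, hx₁, hlt⟩
  obtain ⟨x, hxT, hmin⟩ := hT.exists_isMinOn ⟨x₁, hx₁⟩ (hu.sub hφ)
  have hneg : u x - φ x < 0 := (hmin hx₁).trans_lt (sub_neg.2 hlt)
  have hxΩ : x ∈ Ω := by
    by_contra hx
    linarith [hle x ⟨hxT, hx⟩]
  obtain ⟨p, e, d, hd, hjet, hstrict⟩ := hsub x hxΩ
  refine hstrict.not_ge (hsuper x hxΩ p e d hd ?_)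
  filter_upwards [hjet, hΩ.mem_nhds hxΩ] with y hy hyΩ
  have : u x - φ x ≤ u y - φ y := hmin (hΩT hyΩ)
  linarith

theorem strictPucciSubsolutionOn_quadratic (U : Set E) (c : ℝ) (x₀ p : E) {e : E} {d : ℝ}
    (hd : 0 ≤ d) (hK : K * (d + f) < ‖e‖ ^ 2) :
    StrictPucciSubsolutionOn K f U fun y =>
      c + ⟪p, y - x₀⟫_ℝ + ⟪e, y - x₀⟫_ℝ ^ 2 - d * ‖y - x₀‖ ^ 2 := by
  intro x _
  refine ⟨p + (2 * ⟪e, x - x₀⟫_ℝ) • e - (2 * d) • (x - x₀), e, d, hd, .of_forall fun y => ?_, hK⟩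
  beta_reduce
  rw [← sub_add_sub_cancel y x x₀, norm_add_sq_real]
  simp only [inner_add_right, inner_add_left, inner_sub_left, inner_smul_left, conj_trivial,
    real_inner_comm (x - x₀)]
  apply le_of_eq
  ring

theorem hasSubjet_exp_neg_mul_norm_sub_sq (z x : E) {γ : ℝ} (hγ : 0 < γ) :
    HasSubjet (fun y => Real.exp (-γ * ‖y - z‖ ^ 2)) x
      ((-2 * γ * Real.exp (-γ * ‖x - z‖ ^ 2)) • (x - z))
      ((√(Real.exp (-γ * ‖x - z‖ ^ 2)) * γ) • (x - z))
      (2 * γ * Real.exp (-γ * ‖x - z‖ ^ 2)) := by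
  have hsmall : ∀ᶠ y in 𝓝 x, |γ * ⟪x - z, y - x⟫_ℝ| < 1 / 2 ∧ γ * ‖y - x‖ ^ 2 < 1 := by
    have hc₁ : Continuous fun y => |γ * ⟪x - z, y - x⟫_ℝ| := by fun_prop
    have hc₂ : Continuous fun y => γ * ‖y - x‖ ^ 2 := by fun_prop
    exact (hc₁.continuousAt.eventually_lt continuousAt_const (by simp)).and
      (hc₂.continuousAt.eventually_lt continuousAt_const (by simp))
  filter_upwards [hsmall] with y ⟨hi, hn⟩
  set G := Real.exp (-γ * ‖x - z‖ ^ 2) with hG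
  have hG₀ : 0 < G := Real.exp_pos _
  have hi' := abs_lt.1 hi
  set i := ⟪x - z, y - x⟫_ℝ
  set t := -γ * (2 * i + ‖y - x‖ ^ 2) with ht
  have hexp : Real.exp (-γ * ‖y - z‖ ^ 2) = G * Real.exp (t / 2) ^ 2 := by
    rw [← sub_add_sub_cancel y x z, norm_add_sq_real, real_inner_comm, hG, ← Real.exp_nat_mul,
      ← Real.exp_add]
    congr 1
    push_cast
    ring
  -- `exp t = exp (t / 2) ^ 2 ≥ (1 + t / 2) ^ 2` retains the term quadratic in the inner product.
  have hsq : 1 - 2 * γ * i + γ ^ 2 * i ^ 2 - 2 * γ * ‖y - x‖ ^ 2 ≤ (1 + t / 2) ^ 2 := by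
    have hmul : 0 ≤ γ * ‖y - x‖ ^ 2 * (1 + γ * i) := mul_nonneg (by positivity) (by linarith)
    rw [ht]
    nlinarith [sq_nonneg (γ * ‖y - x‖ ^ 2)]
  have hle : (1 + t / 2) ^ 2 ≤ Real.exp (t / 2) ^ 2 := by
    have ht₀ : 0 ≤ 1 + t / 2 := by rw [ht]; nlinarith
    gcongr
    linarith [Real.add_one_le_exp (t / 2)]
  have := mul_le_mul_of_nonneg_left (hsq.trans hle) hG₀.le
  simp only [inner_smul_left, conj_trivial, mul_pow, Real.sq_sqrt hG₀.le, hexp]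
  linarith

theorem strictPucciSubsolutionOn_exp (z : E) {γ : ℝ} (hγ : 0 < γ)
    (hK : ∀ x ∈ U, 2 * K < γ * ‖x - z‖ ^ 2) :
    StrictPucciSubsolutionOn K 0 U fun y => Real.exp (-γ * ‖y - z‖ ^ 2) := by
  intro x hx
  refine ⟨_, _, _, by positivity, hasSubjet_exp_neg_mul_norm_sub_sq z x hγ, ?_⟩
  have hG := Real.exp_pos (-γ * ‖x - z‖ ^ 2)
  rw [norm_smul, mul_pow, Real.norm_eq_abs, sq_abs, mul_pow, Real.sq_sqrt hG.le]
  have := mul_lt_mul_of_pos_left (hK x hx) (mul_pos hγ hG)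
  linarith

theorem StrictPucciSubsolutionOn.mul_sub_const (h : StrictPucciSubsolutionOn K 0 U φ) {k : ℝ}
    (hk : 0 < k) (b : ℝ) : StrictPucciSubsolutionOn K 0 U fun y => k * (φ y - b) := by
  intro x hx
  obtain ⟨p, e, d, hd, hjet, hlt⟩ := h x hx
  refine ⟨k • p, √k • e, k * d, by positivity, ?_, ?_⟩
  · filter_upwards [hjet] with y hy
    simp only [inner_smul_left, conj_trivial, mul_pow, Real.sq_sqrt hk.le]
    linarith [mul_le_mul_of_nonneg_left hy hk.le]
  · rw [norm_smul, mul_pow, Real.norm_eq_abs, sq_abs, Real.sq_sqrt hk.le]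
    linarith [mul_lt_mul_of_pos_left hlt hk]

/-- Continuous nonnegative viscosity supersolutions on `D` of the homogeneous equation. -/
structure NonnegPucciSupersolutionOn (K : ℝ) (D : Set E) (u : E → ℝ) : Prop where
  continuousOn : ContinuousOn u D
  supersolution : PucciSupersolutionOn K 0 D u
  nonneg : ∀ x ∈ D, 0 ≤ u x

theorem NonnegPucciSupersolutionOn.mono {D D' : Set E} (h : NonnegPucciSupersolutionOn K D u)
    (hD : D' ⊆ D) : NonnegPucciSupersolutionOn K D' u :=
  ⟨h.continuousOn.mono hD, h.supersolution.mono hD, fun x hx => h.nonneg x (hD hx)⟩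

end Supersolutions

section VertexMap
open Metric Filter Topology
open scoped InnerProductSpace

variable {E : Type*} [NormedAddCommGroup E] [InnerProductSpace ℝ E] {K f : ℝ} {u : E → ℝ}

theorem wedge_quadratic_le {t h r : ℝ} (hK : 1 ≤ K) (hr : 0 ≤ r) (hth : t ^ 2 ≤ h ^ 2)
    (ht : |t| ≤ 2 * r) (hbd : 6 * K * r ≤ h ∨ 2 * r ≤ |t|) :
    (t + 2 * r) ^ 2 - (h ^ 2 - t ^ 2) / (2 * K) ≤ 16 * r * max 0 (t - r) := by
  rcases hbd with hh | ht'
  · suffices (t + 2 * r) ^ 2 ≤ (h ^ 2 - t ^ 2) / (2 * K) from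
      (sub_nonpos.2 this).trans (by positivity)
    have ht₁ := abs_le.1 ht
    have hsum : (t + 2 * r) ^ 2 ≤ 16 * r ^ 2 := by nlinarith
    have hh2 : (6 * K * r) ^ 2 ≤ h ^ 2 := by gcongr
    have ht2 : t ^ 2 ≤ 4 * r ^ 2 := by nlinarith
    have hK2 : (32 * K + 4) * r ^ 2 ≤ 36 * K ^ 2 * r ^ 2 := by gcongr; nlinarith
    rw [le_div_iff₀ (by positivity)]
    nlinarith
  · have hdiv : 0 ≤ (h ^ 2 - t ^ 2) / (2 * K) :=
      div_nonneg (sub_nonneg.2 hth) (by positivity)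
    rcases le_abs.1 ht' with ht₁ | ht₁
    · obtain rfl : t = 2 * r := le_antisymm (le_of_abs_le ht) ht₁
      nlinarith [mul_le_mul_of_nonneg_left (le_max_right 0 (2 * r - r)) hr]
    · obtain rfl : t = -(2 * r) := le_antisymm (by linarith) (neg_le_of_abs_le ht)
      nlinarith [mul_le_mul_of_nonneg_left (le_max_left 0 (-(2 * r) - r)) hr]

theorem strictPucciSubsolutionOn_wedge (U : Set E) (c r : ℝ) (x₀ : E) {e : E} {k : ℝ}
    (he : ‖e‖ = 1) (hK : 0 < K) (hk : 0 < k) (hf : K * f < k / 2) :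
    StrictPucciSubsolutionOn K f U fun z =>
      c + k * ((⟪e, z - x₀⟫_ℝ + 2 * r) ^ 2
        - (‖z - x₀‖ ^ 2 - ⟪e, z - x₀⟫_ℝ ^ 2) / (2 * K)) := by
  set l := k * (1 + 1 / (2 * K)) with hl
  have hl₀ : 0 ≤ l := by positivity
  have hstrict : K * (k / (2 * K) + f) < ‖√l • e‖ ^ 2 := by
    rw [norm_smul, he, mul_one, Real.norm_eq_abs, sq_abs, Real.sq_sqrt hl₀]
    calc K * (k / (2 * K) + f) = k / 2 + K * f := by field_simp
      _ < k := by linarith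
      _ ≤ l := le_mul_of_one_le_right hk.le (le_add_of_nonneg_right (by positivity))
  convert strictPucciSubsolutionOn_quadratic U (c + k * (2 * r) ^ 2) x₀ ((4 * k * r) • e)
    (by positivity) hstrict using 2 with z
  simp only [real_inner_smul_left, mul_pow, Real.sq_sqrt hl₀]
  rw [hl]
  ring

variable [FiniteDimensional ℝ E]

/- Otherwise a multiple of the quadratic in `wedge_quadratic_le` lies below `w` where
`‖z - x₀‖ = 6 K r` or `|⟪e, z - x₀⟫| = 2 r`, but above `w` at `x₀`. -/
theorem PucciSupersolutionOn.slope_le_of_wedge_le {w : E → ℝ} {x₀ e : E} {r s : ℝ} (hK : 1 ≤ K)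
    (hf : 0 ≤ f) (hr : 0 < r) (he : ‖e‖ = 1)
    (hcont : ContinuousOn w (closedBall x₀ (6 * K * r)))
    (hsuper : PucciSupersolutionOn K f (closedBall x₀ (6 * K * r)) w)
    (hmin : ∀ z ∈ closedBall x₀ (6 * K * r), w x₀ ≤ w z)
    (hwedge : ∀ z ∈ closedBall x₀ (6 * K * r), w x₀ + s * (⟪e, z - x₀⟫_ℝ - r) ≤ w z) :
    s ≤ 32 * K * f * r := by
  by_contra! hlt
  have hs : 0 < s := lt_of_le_of_lt (by positivity) hlt
  have : 0 < K * r := by positivity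
  have hsq : ∀ v, ⟪e, v⟫_ℝ ^ 2 ≤ ‖v‖ ^ 2 := fun v =>
    sq_le_sq.2 ((abs_real_inner_le_norm e v).trans (by simp [he]))
  have hinner : Continuous fun z : E => |⟪e, z - x₀⟫_ℝ| := by fun_prop
  have hk : K * f < s / (16 * r) / 2 := by
    rw [div_div, lt_div_iff₀ (by positivity)]
    linarith
  set T : Set E := closedBall x₀ (6 * K * r) ∩ {z | |⟪e, z - x₀⟫_ℝ| ≤ 2 * r}
  set Ω : Set E := ball x₀ (6 * K * r) ∩ {z | |⟪e, z - x₀⟫_ℝ| < 2 * r}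
  have hΩT : Ω ⊆ T :=
    inter_subset_inter ball_subset_closedBall (ofPred_subset_ofPred.2 fun _ => le_of_lt)
  have hcomp := (hsuper.mono (hΩT.trans inter_subset_left)).le_of_le_on_diff
    (T := T) ((isCompact_closedBall x₀ _).inter_right (isClosed_le hinner continuous_const))
    (isOpen_ball.inter (isOpen_lt hinner continuous_const)) hΩT (hcont.mono inter_subset_left)
    (by fun_prop)
    (strictPucciSubsolutionOn_wedge Ω (w x₀) r x₀ he (by positivity) (by positivity) hk) ?_
  · have h₀ := hcomp x₀ ⟨mem_closedBall_self (by positivity), by simp [hr.le]⟩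
    have : 0 < s / (16 * r) * (2 * r) ^ 2 := by positivity
    simp only [sub_self, inner_zero_right, zero_add, norm_zero, zero_pow two_ne_zero, zero_div,
      sub_zero] at h₀
    linarith
  · rintro z ⟨⟨hzB, hzt⟩, hzΩ⟩
    have hbd : 6 * K * r ≤ ‖z - x₀‖ ∨ 2 * r ≤ |⟪e, z - x₀⟫_ℝ| := by
      rw [← dist_eq_norm]
      by_contra! h
      exact hzΩ h
    have hle := mul_le_mul_of_nonneg_left (wedge_quadratic_le hK hr.le (hsq _) hzt hbd)
      (show 0 ≤ s / (16 * r) by positivity)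
    rw [← mul_assoc, div_mul_cancel₀ _ (by positivity), mul_max_of_nonneg _ _ hs.le] at hle
    have : max (s * 0) (s * (⟪e, z - x₀⟫_ℝ - r)) ≤ w z - w x₀ :=
      max_le (by linarith [hmin z hzB]) (by linarith [hwedge z hzB])
    linarith

theorem norm_sub_le_of_isMinOn_paraboloid {D : Set E} {x₀ x₁ y₀ y₁ : E} {a r : ℝ} (hK : 1 ≤ K)
    (ha : 0 < a) (hr : 0 < r) (hcont : ContinuousOn u D) (hsuper : PucciSupersolutionOn K 0 D u)
    (hball : closedBall x₀ (6 * K * r) ⊆ D) (hx₁ : x₁ ∈ D) (hx : ‖x₁ - x₀‖ ≤ r)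
    (hmin₀ : IsMinOn (fun z => u z + a * ‖z - y₀‖ ^ 2) D x₀)
    (hmin₁ : IsMinOn (fun z => u z + a * ‖z - y₁‖ ^ 2) D x₁) :
    ‖y₁ - y₀‖ ≤ 16 * K * r := by
  rcases eq_or_ne y₁ y₀ with rfl | hy
  · simp only [sub_self, norm_zero]
    positivity
  set s := ‖y₁ - y₀‖
  have hs : 0 < s := norm_pos_iff.2 (sub_ne_zero.2 hy)
  set e : E := s⁻¹ • (y₁ - y₀)
  have he : ‖e‖ = 1 := norm_smul_inv_norm (𝕜 := ℝ) (sub_ne_zero.2 hy)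
  have hye : y₁ - y₀ = s • e := (smul_inv_smul₀ hs.ne' _).symm
  have hslope := (hsuper.add_mul_norm_sub_sq ha.le y₀).mono hball
    |>.slope_le_of_wedge_le (s := 2 * a * s) hK (by positivity) hr he
      ((hcont.mono hball).add (by fun_prop)) (fun z hz => hmin₀ (hball hz)) fun z hz => ?_
  · have : a * s ≤ a * (16 * K * r) := by linarith
    exact le_of_mul_le_mul_left this ha
  · have h₀ := isMinOn_iff.1 hmin₀ x₁ hx₁
    have h₁ := isMinOn_iff.1 hmin₁ z (hball hz)
    have hpar : ∀ v, ‖v - y₁‖ ^ 2 = ‖v - y₀‖ ^ 2 - 2 * (s * ⟪e, v - y₀⟫_ℝ) + s ^ 2 := fun v => by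
      rw [← sub_sub_sub_cancel_right v y₁ y₀, norm_sub_sq_real, real_inner_comm, hye,
        real_inner_smul_left, norm_smul, he, mul_one, Real.norm_eq_abs, sq_abs]
    have hxe : ⟪e, x₁ - x₀⟫_ℝ ≤ r := (real_inner_le_norm _ _).trans (by rwa [he, one_mul])
    have hle : a * s * ⟪e, x₁ - x₀⟫_ℝ ≤ a * s * r := by gcongr
    rw [hpar, hpar] at h₁
    simp only [inner_sub_right, Pi.add_apply] at h₁ hle ⊢
    linarith

theorem dist_le_of_isMinOn_paraboloid {D : Set E} {x₀ x₁ y₀ y₁ : E} {a δ : ℝ} (hK : 1 ≤ K)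
    (ha : 0 < a) (hcont : ContinuousOn u D) (hsuper : PucciSupersolutionOn K 0 D u)
    (hball : closedBall x₀ (6 * K * δ) ⊆ D) (hx₁ : x₁ ∈ D) (hx : dist x₁ x₀ < δ)
    (hmin₀ : IsMinOn (fun z => u z + a * ‖z - y₀‖ ^ 2) D x₀)
    (hmin₁ : IsMinOn (fun z => u z + a * ‖z - y₁‖ ^ 2) D x₁) :
    dist y₁ y₀ ≤ 16 * K * dist x₁ x₀ := by
  have hlim : Tendsto (fun r => 16 * K * r) (𝓝[>] dist x₁ x₀) (𝓝 (16 * K * dist x₁ x₀)) :=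
    ((continuous_const_mul _).tendsto _).mono_left nhdsWithin_le_nhds
  refine ge_of_tendsto hlim ?_
  filter_upwards [Ioo_mem_nhdsGT hx] with r ⟨hxr, hrδ⟩
  rw [dist_eq_norm] at hxr ⊢
  refine norm_sub_le_of_isMinOn_paraboloid hK ha ((norm_nonneg _).trans_lt hxr) hcont hsuper
    ((closedBall_subset_closedBall ?_).trans hball) hx₁ hxr.le hmin₀ hmin₁
  gcongr

end VertexMap

section AreaEstimate
open Metric Filter Topology Module
open scoped ENNReal NNReal

theorem exists_measurable_partition_dist_lt (X : Type*) [PseudoMetricSpace X]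
    [TopologicalSpace.SeparableSpace X] [Nonempty X] [MeasurableSpace X] [OpensMeasurableSpace X]
    {δ : ℝ} (hδ : 0 < δ) :
    ∃ P : ℕ → Set X, (∀ i, MeasurableSet (P i)) ∧ Pairwise (Function.onFun Disjoint P) ∧
      ⋃ i, P i = univ ∧ ∀ i, ∀ x ∈ P i, ∀ y ∈ P i, dist x y < δ := by
  set B : ℕ → Set X := fun i => ball (TopologicalSpace.denseSeq X i) (δ / 2)
  refine ⟨disjointed B, fun i => .disjointed (fun _ => measurableSet_ball) i,
    disjoint_disjointed B, ?_, fun i x hx y hy => ?_⟩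
  · rw [iUnion_disjointed, eq_univ_iff_forall]
    intro x
    exact mem_iUnion.2 ((TopologicalSpace.denseRange_denseSeq X).exists_dist_lt x (half_pos hδ))
  · have hx' : dist x _ < δ / 2 := disjointed_subset B i hx
    have hy' : dist y _ < δ / 2 := disjointed_subset B i hy
    linarith [dist_triangle_right x y (TopologicalSpace.denseSeq X i)]

variable {E : Type*} [NormedAddCommGroup E] [InnerProductSpace ℝ E] [FiniteDimensional ℝ E]
  [MeasurableSpace E] [BorelSpace E] {μ : Measure E} [μ.IsAddHaarMeasure]

theorem addHaar_image_le_of_lipschitzOnWith {g : E → E} {s : Set E} {L : ℝ≥0}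
    (hg : LipschitzOnWith L g s) : μ (g '' s) ≤ (L : ℝ≥0∞) ^ finrank ℝ E * μ s := by
  have : (Measure.hausdorffMeasure (finrank ℝ E) : Measure E).IsAddHaarMeasure :=
    isAddHaarMeasure_hausdorffMeasure
  rw [Measure.isAddLeftInvariant_eq_smul μ (Measure.hausdorffMeasure (finrank ℝ E))]
  simp only [Measure.smul_apply]
  have h := hg.hausdorffMeasure_image_le (d := finrank ℝ E) (by positivity)
  rw [ENNReal.rpow_natCast] at h
  exact (smul_mono_right _ h).trans (mul_smul_comm _ _ _).ge

theorem addHaar_le_of_antilipschitzOn {X : E → E} {V A : Set E} {L : ℝ≥0}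
    (hX : MapsTo X V A) (hanti : ∀ y ∈ V, ∀ y' ∈ V, dist y y' ≤ L * dist (X y) (X y')) :
    μ V ≤ (L : ℝ≥0∞) ^ finrank ℝ E * μ A := by
  have hinj : InjOn X V := fun y hy y' hy' heq => by
    simpa [heq] using hanti y hy y' hy'
  have hinv : LeftInvOn (Function.invFunOn X V) X V := hinj.leftInvOn_invFunOn
  have hlip : LipschitzOnWith L (Function.invFunOn X V) (X '' V) := by
    refine .of_dist_le_mul ?_
    rintro _ ⟨y, hy, rfl⟩ _ ⟨y', hy', rfl⟩
    rw [hinv hy, hinv hy']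
    exact hanti y hy y' hy'
  calc μ V = μ (Function.invFunOn X V '' (X '' V)) := by rw [hinv.image_image]
    _ ≤ _ := addHaar_image_le_of_lipschitzOnWith hlip
    _ ≤ _ := by gcongr; exact hX.image_subset

theorem addHaar_le_of_locally_antilipschitzOn {X : E → E} {V A : Set E} {L : ℝ≥0} {δ : ℝ}
    (hδ : 0 < δ) (hA : MeasurableSet A) (hX : MapsTo X V A)
    (hanti : ∀ y ∈ V, ∀ y' ∈ V, dist (X y) (X y') < δ → dist y y' ≤ L * dist (X y) (X y')) :
    μ V ≤ (L : ℝ≥0∞) ^ finrank ℝ E * μ A := by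
  obtain ⟨P, hPm, hPd, hPu, hPδ⟩ := exists_measurable_partition_dist_lt E hδ
  have hpiece : ∀ i, μ (V ∩ X ⁻¹' P i) ≤ (L : ℝ≥0∞) ^ finrank ℝ E * μ (A ∩ P i) := fun i =>
    addHaar_le_of_antilipschitzOn (fun _ hy => ⟨hX hy.1, hy.2⟩)
      fun y hy y' hy' => hanti y hy.1 y' hy'.1 (hPδ i _ hy.2 _ hy'.2)
  calc μ V = μ (⋃ i, V ∩ X ⁻¹' P i) := by
        rw [← inter_iUnion, ← preimage_iUnion, hPu, preimage_univ, inter_univ]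
    _ ≤ ∑' i, μ (V ∩ X ⁻¹' P i) := measure_iUnion_le _
    _ ≤ ∑' i, (L : ℝ≥0∞) ^ finrank ℝ E * μ (A ∩ P i) := ENNReal.tsum_le_tsum hpiece
    _ = (L : ℝ≥0∞) ^ finrank ℝ E * μ (⋃ i, A ∩ P i) := by
        rw [ENNReal.tsum_mul_left, measure_iUnion
          (fun i j hij => (hPd hij).mono inter_subset_right inter_subset_right)
          fun i => hA.inter (hPm i)]
    _ = (L : ℝ≥0∞) ^ finrank ℝ E * μ A := by rw [← inter_iUnion, hPu, inter_univ]

end AreaEstimate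

section FillsBall
open Metric Filter Topology
open scoped ENNReal NNReal

variable {X : Type*} [PseudoMetricSpace X] [MeasurableSpace X]

/-- The set `S` occupies more than the fraction `1 - ε` of the closed ball of center `x` and radius
`r`. -/
def FillsBall (μ : Measure X) (ε : ℝ≥0) (S : Set X) (x : X) (r : ℝ) : Prop :=
  μ (closedBall x r \ S) < ε * μ (closedBall x r)

variable {μ : Measure X} {ε : ℝ≥0} {S T F : Set X} {x : X}

theorem FillsBall.mono {r : ℝ} (h : FillsBall μ ε S x r) (hST : S ⊆ T) : FillsBall μ ε T x r :=
  (measure_mono (sdiff_subset_sdiff_right hST)).trans_lt h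

theorem exists_not_fillsBall_closedBall_subset {ρ : ℝ} (hρ : 0 < ρ)
    (hno : ¬FillsBall μ ε S x ρ) (hsmall : ∀ᶠ r in 𝓝[>] (0 : ℝ), FillsBall μ ε S x r)
    (hF : ∀ s, 0 < s → 2 * s ≤ ρ → FillsBall μ ε S x s → closedBall x (2 * s) ⊆ F) :
    ∃ r, 0 < r ∧ r ≤ ρ ∧ ¬FillsBall μ ε S x r ∧ closedBall x r ⊆ F := by
  classical
  have hlim : Tendsto (fun j : ℕ => ρ / 2 ^ j) atTop (𝓝[>] 0) := by
    refine tendsto_nhdsWithin_iff.2 ⟨?_, .of_forall fun j => by simp only [mem_Ioi]; positivity⟩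
    exact tendsto_const_nhds.div_atTop (tendsto_pow_atTop_atTop_of_one_lt one_lt_two)
  have hex : ∃ j : ℕ, FillsBall μ ε S x (ρ / 2 ^ j) := (hlim.eventually hsmall).exists
  obtain ⟨j, hj⟩ : ∃ j, Nat.find hex = j + 1 :=
    Nat.exists_eq_succ_of_ne_zero fun h => hno (by simpa [h] using Nat.find_spec hex)
  have htwo : 2 * (ρ / 2 ^ (j + 1)) = ρ / 2 ^ j := by rw [pow_succ]; field_simp
  have hle : ρ / 2 ^ j ≤ ρ := div_le_self hρ.le (one_le_pow₀ one_le_two)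
  refine ⟨ρ / 2 ^ j, by positivity, hle, Nat.find_min hex (by omega), ?_⟩
  rw [← htwo]
  exact hF _ (by positivity) (htwo.trans_le hle) (hj ▸ Nat.find_spec hex)

end FillsBall

section CriticalDensity
open Metric Module
open scoped ENNReal NNReal

/-- The density `ε` for which a nonnegative supersolution whose superlevel set `{m ≤ u}` fills a
ball up to a fraction `ε` is at least `m / 2` on the concentric ball of half the radius. -/
def criticalDensity (E : Type*) [NormedAddCommGroup E] [NormedSpace ℝ E] (K : ℝ) : ℝ≥0 :=
  (256 * K.toNNReal)⁻¹ ^ finrank ℝ E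

variable {E : Type*} [NormedAddCommGroup E] [InnerProductSpace ℝ E] {K : ℝ} {u : E → ℝ}

theorem criticalDensity_pos (hK : 0 < K) : 0 < criticalDensity E K := by
  have := Real.toNNReal_pos.2 hK
  unfold criticalDensity
  positivity

variable [FiniteDimensional ℝ E]

theorem exists_isMinOn_paraboloid_of_lt {z y : E} {r m : ℝ} (hr : 0 < r) (hm : 0 < m)
    (hcont : ContinuousOn u (closedBall z (r / 2))) (hpos : ∀ v ∈ closedBall z (r / 2), 0 ≤ u v)
    (hz : u z < m / 2) (hy : y ∈ closedBall z (r / 16)) :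
    ∃ x ∈ ball z (3 * r / 8), u x < m ∧
      IsMinOn (fun v => u v + 16 * m / r ^ 2 * ‖v - y‖ ^ 2) (closedBall z (r / 2)) x := by
  have hzmem : z ∈ closedBall z (r / 2) := mem_closedBall_self (by positivity)
  obtain ⟨x, hx, hmin⟩ := (isCompact_closedBall z (r / 2)).exists_isMinOn ⟨z, hzmem⟩
    (hcont.add (g := fun v => 16 * m / r ^ 2 * ‖v - y‖ ^ 2) (by fun_prop))
  set a := 16 * m / r ^ 2
  have : 0 < a := by positivity
  have har : a * r ^ 2 = 16 * m := div_mul_cancel₀ _ (by positivity)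
  have hzy : ‖z - y‖ ≤ r / 16 := by rwa [← dist_eq_norm, dist_comm]
  have hle : u x + a * ‖x - y‖ ^ 2 ≤ u z + a * ‖z - y‖ ^ 2 := hmin hzmem
  have hazy : a * ‖z - y‖ ^ 2 ≤ m / 16 := by
    calc a * ‖z - y‖ ^ 2 ≤ a * (r / 16) ^ 2 := by gcongr
      _ = m / 16 := by linear_combination har / 256
  refine ⟨x, ?_, ?_, hmin⟩
  · by_contra hfar
    rw [mem_ball, not_lt, dist_eq_norm, ← sub_sub_sub_cancel_right x z y] at hfar
    have hxy : 5 * r / 16 ≤ ‖x - y‖ := by linarith [norm_sub_le (x - y) (z - y)]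
    have haxy : 25 * m / 16 ≤ a * ‖x - y‖ ^ 2 := by
      calc 25 * m / 16 = a * (5 * r / 16) ^ 2 := by linear_combination -25 * har / 256
        _ ≤ a * ‖x - y‖ ^ 2 := by gcongr
    linarith [hpos x hx]
  · linarith [show 0 ≤ a * ‖x - y‖ ^ 2 by positivity]

variable [MeasurableSpace E] [BorelSpace E] {μ : Measure E} [μ.IsAddHaarMeasure]

theorem addHaar_closedBall_nnreal_mul (μ : Measure E) [μ.IsAddHaarMeasure] (k : ℝ≥0) (x y : E)
    {r : ℝ} (hr : 0 ≤ r) :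
    μ (closedBall x (k * r)) = (k : ℝ≥0∞) ^ finrank ℝ E * μ (closedBall y r) := by
  rw [Measure.addHaar_closedBall_mul μ x k.coe_nonneg hr, Measure.addHaar_closedBall_center μ y,
    ENNReal.ofReal_pow k.coe_nonneg, ENNReal.ofReal_coe_nnreal]

theorem pow_mul_criticalDensity_mul_addHaar_closedBall (μ : Measure E) [μ.IsAddHaarMeasure]
    (hK : 0 < K) (x z : E) {r : ℝ} (hr : 0 ≤ r) :
    ((16 * K.toNNReal : ℝ≥0) : ℝ≥0∞) ^ finrank ℝ E *
      (criticalDensity E K * μ (closedBall x r)) = μ (closedBall z (r / 16)) := by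
  have := Real.toNNReal_pos.2 hK
  have hconst : (16 * K.toNNReal) ^ finrank ℝ E * criticalDensity E K =
      (1 / 16) ^ finrank ℝ E := by
    rw [criticalDensity, ← mul_pow]
    congr 1
    field_simp
    norm_num
  have hball : r / 16 = (1 / 16 : ℝ≥0) * r := by push_cast; ring
  rw [hball, addHaar_closedBall_nnreal_mul μ _ z x hr, ← mul_assoc]
  norm_cast
  rw [hconst]

theorem PucciSupersolutionOn.addHaar_le_of_isMinOn_paraboloid {z : E} {a R' R : ℝ} (hK : 1 ≤ K)
    (ha : 0 < a) (hR : R' < R) (hcont : ContinuousOn u (closedBall z R))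
    (hsuper : PucciSupersolutionOn K 0 (closedBall z R) u) {V A : Set E} (hA : MeasurableSet A)
    (hcontact : ∀ y ∈ V, ∃ x ∈ A ∩ ball z R',
      IsMinOn (fun v => u v + a * ‖v - y‖ ^ 2) (closedBall z R) x) :
    μ V ≤ ((16 * K.toNNReal : ℝ≥0) : ℝ≥0∞) ^ finrank ℝ E * μ A := by
  choose! X hX hmin using hcontact
  have hKL : ((16 * K.toNNReal : ℝ≥0) : ℝ) = 16 * K := by simp [zero_le_one.trans hK]
  have hδ : 6 * K * ((R - R') / (6 * K)) = R - R' := mul_div_cancel₀ _ (by positivity)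
  refine addHaar_le_of_locally_antilipschitzOn (δ := (R - R') / (6 * K))
    (div_pos (by linarith) (by positivity)) hA (fun y hy => (hX y hy).1) fun y hy y' hy' hd => ?_
  rw [hKL]
  refine dist_le_of_isMinOn_paraboloid hK ha hcont hsuper
    (closedBall_subset_closedBall' ?_) (ball_subset_closedBall.trans
      (closedBall_subset_closedBall hR.le) (hX y hy).2) hd (hmin y' hy') (hmin y hy)
  linarith [mem_ball.1 (hX y' hy').2]

/- If `u z < m / 2`, sliding the paraboloids with vertices in `closedBall z (r / 16)` up to the
graph of `u` touches it only at points where `u < m`, so these points have large measure. -/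
theorem NonnegPucciSupersolutionOn.half_le_of_fillsBall {x : E} {r m : ℝ} (hK : 1 ≤ K)
    (hr : 0 < r) (hm : 0 < m) (hu : NonnegPucciSupersolutionOn K (closedBall x r) u)
    (hfill : FillsBall μ (criticalDensity E K) {y | m ≤ u y} x r) :
    ∀ z ∈ closedBall x (r / 2), m / 2 ≤ u z := by
  intro z hz
  by_contra! hlt
  have hzx := mem_closedBall.1 hz
  have hsub : closedBall z (r / 2) ⊆ closedBall x r :=
    closedBall_subset_closedBall' (by linarith)
  have huz := hu.mono hsub
  set A : Set E := ball x r ∩ u ⁻¹' Iio m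
  have hA : IsOpen A :=
    (hu.continuousOn.mono ball_subset_closedBall).isOpen_inter_preimage isOpen_ball isOpen_Iio
  have hAle : μ A ≤ μ (closedBall x r \ {y | m ≤ u y}) :=
    measure_mono fun y hy => ⟨ball_subset_closedBall hy.1, fun hle : m ≤ u y => not_lt.2 hle hy.2⟩
  have hV : μ (closedBall z (r / 16)) ≤ ((16 * K.toNNReal : ℝ≥0) : ℝ≥0∞) ^ finrank ℝ E * μ A := by
    refine huz.supersolution.addHaar_le_of_isMinOn_paraboloid (a := 16 * m / r ^ 2)
      (R' := 3 * r / 8) hK (by positivity) (by linarith) huz.continuousOn hA.measurableSet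
      fun y hy => ?_
    obtain ⟨v, hv, hvm, hmin⟩ := exists_isMinOn_paraboloid_of_lt hr hm huz.continuousOn
      huz.nonneg hlt hy
    exact ⟨v, ⟨⟨ball_subset_ball' (by linarith) hv, hvm⟩, hv⟩, hmin⟩
  have hlt' := ENNReal.mul_lt_mul_right (a := ((16 * K.toNNReal : ℝ≥0) : ℝ≥0∞) ^ finrank ℝ E)
    (by have := Real.toNNReal_pos.2 (zero_lt_one.trans_le hK); positivity)
    (ENNReal.pow_ne_top ENNReal.coe_ne_top) (hAle.trans_lt hfill)
  rw [pow_mul_criticalDensity_mul_addHaar_closedBall μ (by positivity) x z hr.le] at hlt'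
  exact (hV.trans_lt hlt').false

end CriticalDensity

section InkSpots
open Metric Filter Topology Module
open scoped ENNReal NNReal

variable {E : Type*} [NormedAddCommGroup E] [InnerProductSpace ℝ E] [FiniteDimensional ℝ E]
  [MeasurableSpace E] [BorelSpace E] {μ : Measure E} [μ.IsAddHaarMeasure] {ε : ℝ≥0} {S F : Set E}

theorem ae_eventually_fillsBall (μ : Measure E) [μ.IsAddHaarMeasure] (hS : MeasurableSet S)
    (hε : 0 < ε) : ∀ᵐ x ∂μ, x ∈ S → ∀ᶠ r in 𝓝[>] (0 : ℝ), FillsBall μ ε S x r := by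
  filter_upwards [Besicovitch.ae_tendsto_measure_inter_div_of_measurableSet μ hS.compl]
    with x hx hxS
  rw [indicator_of_notMem (notMem_compl_iff.2 hxS)] at hx
  filter_upwards [hx.eventually_lt_const (ENNReal.coe_pos.2 hε), self_mem_nhdsWithin] with r hr hr₀
  rwa [ENNReal.div_lt_iff (.inl (measure_closedBall_pos μ x hr₀).ne')
    (.inl measure_closedBall_lt_top.ne), inter_comm, ← sdiff_eq] at hr

theorem exists_disjoint_closedBall_addHaar_le (μ : Measure E) [μ.IsAddHaarMeasure] {t : Set E}
    {r : E → ℝ} {ρ : ℝ} (hr : ∀ x ∈ t, 0 < r x) (hrρ : ∀ x ∈ t, r x ≤ ρ) :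
    ∃ v ⊆ t, v.Countable ∧ v.PairwiseDisjoint (fun x => closedBall x (r x)) ∧
      μ t ≤ 5 ^ finrank ℝ E * ∑' x : v, μ (closedBall x (r x)) := by
  obtain ⟨v, hvt, hvd, hcover⟩ := Vitali.exists_disjoint_subfamily_covering_enlargement_closedBall
    t id r ρ hrρ 5 (by norm_num)
  have hv : v.Countable := hvd.countable_of_nonempty_interior fun x hx =>
    ⟨x, ball_subset_interior_closedBall (mem_ball_self (hr x (hvt hx)))⟩
  refine ⟨v, hvt, hv, hvd, ?_⟩
  have hsub : t ⊆ ⋃ x ∈ v, closedBall x (5 * r x) := fun x hx => by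
    obtain ⟨y, hy, hxy⟩ := hcover x hx
    exact mem_biUnion hy (hxy (mem_closedBall_self (hr x hx).le))
  calc μ t ≤ μ (⋃ x ∈ v, closedBall x (5 * r x)) := measure_mono hsub
    _ ≤ ∑' x : v, μ (closedBall x (5 * r x)) := measure_biUnion_le _ hv _
    _ = ∑' x : v, 5 ^ finrank ℝ E * μ (closedBall x (r x)) := tsum_congr fun x => by
        exact_mod_cast addHaar_closedBall_nnreal_mul μ 5 (x : E) x (hr x (hvt x.2)).le
    _ = _ := ENNReal.tsum_mul_left

theorem one_add_mul_addHaar_le_of_fillsBall (hS : MeasurableSet S) (hSF : S ⊆ F) (hε : 0 < ε)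
    {ρ : ℝ} (hρ : 0 < ρ) (hno : ∀ x ∈ S, ¬FillsBall μ ε S x ρ)
    (hF : ∀ x ∈ S, ∀ s, 0 < s → 2 * s ≤ ρ → FillsBall μ ε S x s → closedBall x (2 * s) ⊆ F) :
    ((1 + ε / 5 ^ finrank ℝ E : ℝ≥0) : ℝ≥0∞) * μ S ≤ μ F := by
  set t : Set E := {x ∈ S | ∀ᶠ r in 𝓝[>] (0 : ℝ), FillsBall μ ε S x r}
  have hSt : μ S ≤ μ t := measure_mono_ae <| by
    filter_upwards [ae_eventually_fillsBall μ hS hε] with x hx hxS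
    exact ⟨hxS, hx hxS⟩
  choose! r hr hrρ hnot hrF using fun x (hx : x ∈ t) =>
    exists_not_fillsBall_closedBall_subset hρ (hno x hx.1) hx.2 (hF x hx.1)
  obtain ⟨v, hvt, hv, hvd, hle⟩ := exists_disjoint_closedBall_addHaar_le μ hr hrρ
  have hdiff : ε * ∑' x : v, μ (closedBall (x : E) (r x)) ≤ μ (F \ S) := by
    calc ε * ∑' x : v, μ (closedBall (x : E) (r x))
        = ∑' x : v, ε * μ (closedBall (x : E) (r x)) := ENNReal.tsum_mul_left.symm
      _ ≤ ∑' x : v, μ (closedBall (x : E) (r x) \ S) :=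
          ENNReal.tsum_le_tsum fun x => not_lt.1 (hnot x (hvt x.2))
      _ = μ (⋃ x ∈ v, closedBall x (r x) \ S) :=
          (measure_biUnion hv (fun x hx y hy hxy => (hvd hx hy hxy).mono sdiff_subset sdiff_subset)
            fun x _ => measurableSet_closedBall.diff hS).symm
      _ ≤ μ (F \ S) :=
          measure_mono (iUnion₂_subset fun x hx => sdiff_subset_sdiff_left (hrF x (hvt hx)))
  have hcancel : ((ε / 5 ^ finrank ℝ E : ℝ≥0) : ℝ≥0∞) * 5 ^ finrank ℝ E = ε := by
    norm_cast
    exact div_mul_cancel₀ _ (by positivity)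
  calc ((1 + ε / 5 ^ finrank ℝ E : ℝ≥0) : ℝ≥0∞) * μ S
      = μ S + (ε / 5 ^ finrank ℝ E : ℝ≥0) * μ S := by rw [ENNReal.coe_add, add_mul]; simp
    _ ≤ μ S + (ε / 5 ^ finrank ℝ E : ℝ≥0) *
          (5 ^ finrank ℝ E * ∑' x : v, μ (closedBall (x : E) (r x))) := by
        gcongr
        exact hSt.trans hle
    _ ≤ μ S + μ (F \ S) := by rw [← mul_assoc, hcancel]; gcongr
    _ = μ F := by rw [← measure_inter_add_sdiff F hS, inter_eq_right.2 hSF]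

end InkSpots

section WeakHarnack
open Metric Module
open scoped ENNReal NNReal

variable {E : Type*} [NormedAddCommGroup E] [InnerProductSpace ℝ E] [FiniteDimensional ℝ E]
  {K : ℝ} {u : E → ℝ}

theorem NonnegPucciSupersolutionOn.mul_exp_sub_exp_le {z : E} {R ρ γ m : ℝ}
    (hu : NonnegPucciSupersolutionOn K (closedBall z R) u) (hρ : 0 < ρ) (hγ : 0 < γ) (hm : 0 < m)
    (hK : 2 * K ≤ γ * ρ ^ 2) (hρm : ∀ y ∈ closedBall z ρ, m ≤ u y) :
    ∀ y ∈ closedBall z R,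
      m * (Real.exp (-γ * ‖y - z‖ ^ 2) - Real.exp (-γ * R ^ 2)) ≤ u y := by
  set Ω : Set E := ball z R ∩ (closedBall z ρ)ᶜ
  have hΩ : Ω ⊆ closedBall z R := inter_subset_left.trans ball_subset_closedBall
  refine (hu.supersolution.mono hΩ).le_of_le_on_diff (isCompact_closedBall z R)
    (isOpen_ball.inter isClosed_closedBall.isOpen_compl) hΩ hu.continuousOn (by fun_prop)
    ((strictPucciSubsolutionOn_exp z hγ ?_).mul_sub_const hm _) ?_
  · rintro x ⟨-, hx⟩
    rw [mem_compl_iff, mem_closedBall, not_le, dist_eq_norm] at hx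
    exact hK.trans_lt (by gcongr)
  · rintro x ⟨hxR, hxΩ⟩
    by_cases hx : x ∈ closedBall z ρ
    · have hle : Real.exp (-γ * ‖x - z‖ ^ 2) ≤ 1 :=
        Real.exp_le_one_iff.2 (by rw [neg_mul]; exact neg_nonpos.2 (by positivity))
      have := Real.exp_pos (-γ * R ^ 2)
      exact (mul_le_of_le_one_right hm.le (by linarith)).trans (hρm x hx)
    · have hxR' : ‖x - z‖ = R := by
        rw [← dist_eq_norm]
        exact le_antisymm hxR (not_lt.1 fun hlt => hxΩ ⟨hlt, hx⟩)
      rw [hxR', sub_self, mul_zero]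
      exact hu.nonneg x hxR

theorem NonnegPucciSupersolutionOn.mul_exp_sub_exp_le_of_dist_le {z : E} {R ρ γ m s : ℝ}
    (hu : NonnegPucciSupersolutionOn K (closedBall z R) u) (hρ : 0 < ρ) (hγ : 0 < γ) (hm : 0 < m)
    (hK : 2 * K ≤ γ * ρ ^ 2) (hρm : ∀ y ∈ closedBall z ρ, m ≤ u y) (hs : s ≤ R) :
    ∀ y ∈ closedBall z s, m * (Real.exp (-γ * s ^ 2) - Real.exp (-γ * R ^ 2)) ≤ u y := by
  intro y hy
  refine le_trans ?_ (hu.mul_exp_sub_exp_le hρ hγ hm hK hρm y (closedBall_subset_closedBall hs hy))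
  have hys : ‖y - z‖ ≤ s := by rwa [← dist_eq_norm]
  rw [neg_mul, neg_mul γ (‖y - z‖ ^ 2)]
  gcongr

/-- If a nonnegative supersolution fills a ball with its superlevel set `{m ≤ u}` up to the critical
density, it is at least `growthFactor K * m` on the ball of twice the radius. -/
def growthFactor (K : ℝ) : ℝ := (Real.exp (-(32 * K)) - Real.exp (-(128 * K))) / 2

theorem growthFactor_pos (hK : 0 < K) : 0 < growthFactor K :=
  half_pos (sub_pos.2 (Real.exp_lt_exp.2 (by linarith)))

theorem growthFactor_le_one (hK : 0 ≤ K) : growthFactor K ≤ 1 := by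
  have hle : Real.exp (-(32 * K)) ≤ 1 := Real.exp_le_one_iff.2 (by linarith)
  have := Real.exp_pos (-(128 * K))
  unfold growthFactor
  linarith

variable [MeasurableSpace E] [BorelSpace E] {μ : Measure E} [μ.IsAddHaarMeasure]

theorem NonnegPucciSupersolutionOn.growthFactor_mul_le_of_fillsBall {x : E} {r m : ℝ} (hK : 1 ≤ K)
    (hr : 0 < r) (hm : 0 < m) (hu : NonnegPucciSupersolutionOn K (closedBall x (4 * r)) u)
    (hfill : FillsBall μ (criticalDensity E K) {y | m ≤ u y} x r) :
    ∀ y ∈ closedBall x (2 * r), growthFactor K * m ≤ u y := by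
  have hhalf := (hu.mono (closedBall_subset_closedBall (by linarith))).half_le_of_fillsBall hK hr hm
    hfill
  have hbarrier := hu.mul_exp_sub_exp_le_of_dist_le (s := 2 * r) (γ := 8 * K / r ^ 2) (half_pos hr)
    (by positivity) (half_pos hm) (by field_simp; norm_num) hhalf (by linarith)
  convert hbarrier using 3
  rw [growthFactor, show -(8 * K / r ^ 2) * (2 * r) ^ 2 = -(32 * K) by field_simp; ring,
    show -(8 * K / r ^ 2) * (4 * r) ^ 2 = -(128 * K) by field_simp; ring]
  ring

theorem NonnegPucciSupersolutionOn.mul_addHaar_superlevel_le {z : E} {R ρ m : ℝ} (hK : 1 ≤ K)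
    (hρ : 0 < ρ) (hm : 0 < m) (hu : NonnegPucciSupersolutionOn K (closedBall z (R + 2 * ρ)) u)
    (hno : ∀ x ∈ closedBall z R ∩ {y | m ≤ u y},
      ¬FillsBall μ (criticalDensity E K) (closedBall z R ∩ {y | m ≤ u y}) x ρ) :
    ((1 + criticalDensity E K / 5 ^ finrank ℝ E : ℝ≥0) : ℝ≥0∞) *
        μ (closedBall z R ∩ {y | m ≤ u y}) ≤
      μ (closedBall z (R + ρ) ∩ {y | growthFactor K * m ≤ u y}) := by
  have hmeas : MeasurableSet (closedBall z R ∩ {y | m ≤ u y}) :=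
    ((hu.continuousOn.mono
      (closedBall_subset_closedBall (by linarith))).preimage_isClosed_of_isClosed
        isClosed_closedBall isClosed_Ici).measurableSet
  refine one_add_mul_addHaar_le_of_fillsBall hmeas ?_ (criticalDensity_pos (by positivity)) hρ
    hno ?_
  · refine inter_subset_inter (closedBall_subset_closedBall (by linarith))
      (ofPred_subset_ofPred.2 fun y hy => le_trans ?_ hy)
    exact mul_le_of_le_one_left hm.le (growthFactor_le_one (by positivity))
  · intro x hx s hs hsρ hfill
    have hxz := mem_closedBall.1 hx.1
    refine subset_inter (closedBall_subset_closedBall' (by linarith)) ?_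
    exact (hu.mono (closedBall_subset_closedBall' (by linarith))).growthFactor_mul_le_of_fillsBall
      hK hs hm (hfill.mono inter_subset_right)

theorem NonnegPucciSupersolutionOn.pow_mul_addHaar_superlevel_le {z : E} {r ρ m : ℝ} {N : ℕ}
    (hK : 1 ≤ K) (hρ : 0 < ρ) (hm : 0 < m)
    (hu : NonnegPucciSupersolutionOn K (closedBall z (r + (N + 1) * ρ)) u)
    (hno : ∀ k < N, ∀ x ∈ closedBall z (r + k * ρ),
      ¬FillsBall μ (criticalDensity E K) {y | growthFactor K ^ k * m ≤ u y} x ρ) :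
    (((1 + criticalDensity E K / 5 ^ finrank ℝ E) ^ N : ℝ≥0) : ℝ≥0∞) *
        μ (closedBall z r ∩ {y | m ≤ u y}) ≤
      μ (closedBall z (r + N * ρ) ∩ {y | growthFactor K ^ N * m ≤ u y}) := by
  induction N with
  | zero => simp
  | succ N ih =>
    have hη := growthFactor_pos (zero_lt_one.trans_le hK)
    have hstep := (hu.mono (closedBall_subset_closedBall (by push_cast; linarith)))
      |>.mul_addHaar_superlevel_le (μ := μ) (R := r + N * ρ) (m := growthFactor K ^ N * m) hK hρ
        (by positivity) fun x hx hfill =>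
          hno N N.lt_succ_self x hx.1 (hfill.mono inter_subset_right)
    rw [add_assoc, ← add_one_mul, ← mul_assoc, ← pow_succ'] at hstep
    rw [pow_succ', ENNReal.coe_mul, mul_assoc, Nat.cast_succ]
    have hpow := ih (hu.mono (closedBall_subset_closedBall (by push_cast; linarith)))
      fun k hk => hno k (hk.trans N.lt_succ_self)
    exact (mul_le_mul_right hpow _).trans hstep

theorem NonnegPucciSupersolutionOn.exists_fillsBall_superlevel {z : E} {r m : ℝ} {N : ℕ}
    (hK : 1 ≤ K) (hr : 0 < r) (hm : 0 < m) (hN : 0 < N)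
    (hNlarge : 2 ^ finrank ℝ E * 2 < (1 + criticalDensity E K / 5 ^ finrank ℝ E) ^ N)
    (hu : NonnegPucciSupersolutionOn K (closedBall z (4 * r)) u)
    (hhalf : μ (closedBall z r) ≤ 2 * μ (closedBall z r ∩ {y | m ≤ u y})) :
    ∃ k < N, ∃ x ∈ closedBall z (2 * r),
      FillsBall μ (criticalDensity E K) {y | growthFactor K ^ k * m ≤ u y} x (r / N) := by
  by_contra! hno
  have hN1 : (1 : ℝ) ≤ N := by exact_mod_cast hN
  have hrN : r / N ≤ r := div_le_self hr.le hN1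
  have hNr : N * (r / N) = r := mul_div_cancel₀ r (by positivity)
  have hradius : ∀ k < N, r + k * (r / N) ≤ 2 * r := fun k hk => by
    have : (k : ℝ) * (r / N) ≤ N * (r / N) := by gcongr
    linarith
  have hgrow := (hu.mono (closedBall_subset_closedBall (by rw [add_one_mul, hNr]; linarith)))
    |>.pow_mul_addHaar_superlevel_le (μ := μ) (r := r) (N := N) (ρ := r / N) hK
      (by positivity) hm fun k hk x hx =>
        hno k hk x (closedBall_subset_closedBall (hradius k hk) hx)
  rw [hNr, ← two_mul] at hgrow
  set S := closedBall z r ∩ {y | m ≤ u y}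
  have hS_ne_top : μ S ≠ ⊤ :=
    measure_ne_top_of_subset inter_subset_left measure_closedBall_lt_top.ne
  have hS_ne_zero : μ S ≠ 0 := fun h => by
    rw [h, mul_zero] at hhalf
    exact (measure_closedBall_pos μ z hr).not_ge hhalf
  have hle : (((1 + criticalDensity E K / 5 ^ finrank ℝ E) ^ N : ℝ≥0) : ℝ≥0∞) * μ S ≤
      ((2 ^ finrank ℝ E * 2 : ℝ≥0) : ℝ≥0∞) * μ S := by
    refine hgrow.trans ?_
    calc _ ≤ μ (closedBall z (2 * r)) := measure_mono inter_subset_left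
      _ = 2 ^ finrank ℝ E * μ (closedBall z r) := by
          exact_mod_cast addHaar_closedBall_nnreal_mul μ 2 z z hr.le
      _ ≤ 2 ^ finrank ℝ E * (2 * μ S) := by gcongr
      _ = _ := by push_cast; ring
  rw [ENNReal.mul_le_mul_iff_left hS_ne_zero hS_ne_top, ENNReal.coe_le_coe] at hle
  exact hNlarge.not_ge hle

theorem exists_pos_forall_mul_le_of_addHaar_le (μ : Measure E) [μ.IsAddHaarMeasure] (hK : 1 ≤ K) :
    ∃ c > 0, ∀ (u : E → ℝ) (z : E) (r m : ℝ), 0 < r → 0 < m →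
      NonnegPucciSupersolutionOn K (closedBall z (6 * r)) u →
      μ (closedBall z r) ≤ 2 * μ (closedBall z r ∩ {y | m ≤ u y}) →
      ∀ y ∈ closedBall z r, c * m ≤ u y := by
  have hη := growthFactor_pos (zero_lt_one.trans_le hK)
  have hκ : 1 < 1 + criticalDensity E K / 5 ^ finrank ℝ E :=
    lt_add_of_pos_right _ (div_pos (criticalDensity_pos (by positivity)) (by positivity))
  obtain ⟨N, hN⟩ := pow_unbounded_of_one_lt (2 ^ finrank ℝ E * 2) hκ
  have hN₀ : 0 < N := Nat.pos_of_ne_zero fun h => by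
    rw [h, pow_zero] at hN
    have : (1 : ℝ≥0) ≤ 2 ^ finrank ℝ E * 2 := one_le_mul (one_le_pow₀ one_le_two) one_le_two
    exact this.not_gt hN
  refine ⟨growthFactor K ^ N * (Real.exp (-(9 / 2 * (K * N ^ 2))) - Real.exp (-(8 * (K * N ^ 2)))),
    mul_pos (by positivity) (sub_pos.2 (Real.exp_lt_exp.2 ?_)),
    fun u z r m hr hm hu hhalf y hy => ?_⟩
  · have : 0 < K * N ^ 2 := by positivity
    linarith
  obtain ⟨k, hk, x, hx, hfill⟩ := (hu.mono (closedBall_subset_closedBall (by linarith)))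
    |>.exists_fillsBall_superlevel hK hr hm hN₀ hN hhalf
  have hxz := mem_closedBall.1 hx
  have hyz := mem_closedBall.1 hy
  have hrN : r / N ≤ r := div_le_self hr.le (by exact_mod_cast hN₀)
  have hgrow := (hu.mono (closedBall_subset_closedBall' (by linarith)))
    |>.growthFactor_mul_le_of_fillsBall hK (by positivity) (by positivity) hfill
  have hball : ∀ w ∈ closedBall x (2 * (r / N)), growthFactor K ^ N * m ≤ u w := fun w hw => by
    refine le_trans ?_ (hgrow w hw)
    rw [← mul_assoc, ← pow_succ']
    gcongr ?_ * m
    exact pow_le_pow_of_le_one hη.le (growthFactor_le_one (by positivity)) hk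
  have hbarrier := (hu.mono (closedBall_subset_closedBall' (by linarith)))
    |>.mul_exp_sub_exp_le_of_dist_le (R := 4 * r) (s := 3 * r) (γ := K * N ^ 2 / (2 * r ^ 2))
      (by positivity) (by positivity) (by positivity) (by field_simp; norm_num) hball (by linarith)
      y (mem_closedBall.2 (by linarith [dist_triangle_right y x z]))
  convert hbarrier using 1
  rw [show -(K * N ^ 2 / (2 * r ^ 2)) * (3 * r) ^ 2 = -(9 / 2 * (K * N ^ 2)) by
      field_simp; norm_num,
    show -(K * N ^ 2 / (2 * r ^ 2)) * (4 * r) ^ 2 = -(8 * (K * N ^ 2)) by field_simp; norm_num]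
  ring

end WeakHarnack

section HalfBalls
open Metric
open scoped InnerProductSpace

variable {E : Type*} [NormedAddCommGroup E] [InnerProductSpace ℝ E] {e : E}

/-- The half of the open ball of radius `r` around `0` lying strictly on the `e`-side of the
hyperplane orthogonal to `e`. -/
def openHalfBall (e : E) (r : ℝ) : Set E := {x | ‖x‖ < r ∧ 0 < ⟪e, x⟫_ℝ}

/-- The half ball `openHalfBall e r` together with the flat part of its boundary. -/
def halfBall (e : E) (r : ℝ) : Set E := {x | ‖x‖ < r ∧ 0 ≤ ⟪e, x⟫_ℝ}

/-- The orthogonal projection of `x` onto the hyperplane `{y | ⟪e, y⟫ = τ}`, for a unit vector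
`e`. -/
def hyperplaneProj (e : E) (τ : ℝ) (x : E) : E := x + (τ - ⟪e, x⟫_ℝ) • e

theorem openHalfBall_subset_halfBall (e : E) (r : ℝ) : openHalfBall e r ⊆ halfBall e r :=
  fun _ hx => ⟨hx.1, hx.2.le⟩

theorem openHalfBall_mono (e : E) {r s : ℝ} (h : r ≤ s) : openHalfBall e r ⊆ openHalfBall e s :=
  fun _ hx => ⟨hx.1.trans_le h, hx.2⟩

theorem inner_le_norm_of_norm_eq_one (he : ‖e‖ = 1) (x : E) : ⟪e, x⟫_ℝ ≤ ‖x‖ := by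
  simpa only [he, one_mul] using real_inner_le_norm e x

theorem inner_smul_self_of_norm_eq_one (he : ‖e‖ = 1) (τ : ℝ) : ⟪e, τ • e⟫_ℝ = τ := by
  rw [real_inner_smul_right, real_inner_self_eq_norm_sq, he, one_pow, mul_one]

theorem inner_sub_le_norm_sub (he : ‖e‖ = 1) (x y : E) : ⟪e, x⟫_ℝ - ⟪e, y⟫_ℝ ≤ ‖x - y‖ := by
  simpa only [inner_sub_right] using inner_le_norm_of_norm_eq_one he (x - y)

theorem closedBall_subset_openHalfBall (he : ‖e‖ = 1) {z : E} {R r : ℝ} (hr : ‖z‖ + R < r)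
    (hR : R < ⟪e, z⟫_ℝ) : closedBall z R ⊆ openHalfBall e r := by
  intro y hy
  rw [mem_closedBall_iff_norm'] at hy
  exact ⟨by linarith [norm_sub_norm_le y z, norm_sub_rev y z],
    by linarith [inner_sub_le_norm_sub he z y]⟩

theorem smul_mem_openHalfBall (he : ‖e‖ = 1) {t r : ℝ} (ht : 0 < t) (htr : t < r) :
    t • e ∈ openHalfBall e r := by
  refine ⟨?_, by rwa [inner_smul_self_of_norm_eq_one he]⟩
  rwa [norm_smul, he, mul_one, Real.norm_of_nonneg ht.le]

theorem inner_hyperplaneProj (he : ‖e‖ = 1) (τ : ℝ) (x : E) : ⟪e, hyperplaneProj e τ x⟫_ℝ = τ := by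
  rw [hyperplaneProj, inner_add_right, inner_smul_self_of_norm_eq_one he]
  ring

theorem norm_sub_hyperplaneProj (he : ‖e‖ = 1) (τ : ℝ) (x : E) :
    ‖x - hyperplaneProj e τ x‖ = |τ - ⟪e, x⟫_ℝ| := by
  rw [hyperplaneProj, sub_add_cancel_left, norm_neg, norm_smul, he, mul_one, Real.norm_eq_abs]

theorem norm_hyperplaneProj_sub_smul_le (he : ‖e‖ = 1) (τ : ℝ) (x : E) :
    ‖hyperplaneProj e τ x - τ • e‖ ≤ ‖x‖ := by
  have hsq : ‖hyperplaneProj e τ x - τ • e‖ ^ 2 = ‖x‖ ^ 2 - ⟪e, x⟫_ℝ ^ 2 := by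
    rw [hyperplaneProj, sub_smul, add_sub_assoc, sub_sub_cancel_left, ← sub_eq_add_neg,
      norm_sub_sq_real, real_inner_smul_right, norm_smul, he, real_inner_comm, mul_one,
      Real.norm_eq_abs, sq_abs]
    ring
  refine le_of_sq_le_sq ?_ (norm_nonneg x)
  linarith [sq_nonneg ⟪e, x⟫_ℝ]

theorem norm_hyperplaneProj_le (he : ‖e‖ = 1) (τ : ℝ) (x : E) :
    ‖hyperplaneProj e τ x‖ ≤ ‖x‖ + |τ| := by
  have hτ : ‖τ • e‖ = |τ| := by rw [norm_smul, he, mul_one, Real.norm_eq_abs]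
  linarith [norm_sub_norm_le (hyperplaneProj e τ x) (τ • e),
    norm_hyperplaneProj_sub_smul_le he τ x]

end HalfBalls

section BoundaryLipschitz
open Metric
open scoped InnerProductSpace

variable {E : Type*} [NormedAddCommGroup E] [InnerProductSpace ℝ E] [FiniteDimensional ℝ E]
  {e : E} {K r M : ℝ} {v : E → ℝ}

theorem exp_mul_sub_le_exp_sub_exp (s t : ℝ) : Real.exp t * (s - t) ≤ Real.exp s - Real.exp t := by
  have hle := mul_le_mul_of_nonneg_left (Real.add_one_le_exp (s - t)) (Real.exp_pos t).le
  rw [← Real.exp_add, add_sub_cancel] at hle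
  linarith

/-- Lipschitz constant, at the flat boundary of the unit half ball, of functions in the Pucci class
that are bounded by `1` and vanish on the flat boundary. -/
def boundarySlope (K : ℝ) : ℝ :=
  48 * K * Real.exp (-(3 * K)) / (Real.exp (-(3 * K)) - Real.exp (-(12 * K)))

theorem exp_neg_sub_exp_neg_pos (hK : 0 < K) :
    0 < Real.exp (-(3 * K)) - Real.exp (-(12 * K)) :=
  sub_pos.2 (Real.exp_lt_exp.2 (by linarith))

theorem boundarySlope_pos (hK : 0 < K) : 0 < boundarySlope K :=
  div_pos (by positivity) (exp_neg_sub_exp_neg_pos hK)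

theorem PucciSupersolutionOn.exp_barrier_le (he : ‖e‖ = 1) (hK : 0 < K) (hr : 0 < r) (hM : 0 < M)
    (hv : ContinuousOn v (halfBall e r)) (hsuper : PucciSupersolutionOn K 0 (openHalfBall e r) v)
    (hlow : ∀ x ∈ openHalfBall e r, -M ≤ v x)
    (hflat : ∀ x ∈ halfBall e r, ⟪e, x⟫_ℝ = 0 → 0 ≤ v x) {z : E} (hz : ‖z‖ < r / 2)
    (hez : ⟪e, z⟫_ℝ = -(r / 4)) :
    ∀ y ∈ closedBall z (r / 2) ∩ {y | 0 ≤ ⟪e, y⟫_ℝ},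
      M / (Real.exp (-(3 * K)) - Real.exp (-(12 * K))) *
        (Real.exp (-(48 * K / r ^ 2) * ‖y - z‖ ^ 2) - Real.exp (-(3 * K))) ≤ v y := by
  have hd := exp_neg_sub_exp_neg_pos hK
  have hfar : ∀ y, 0 ≤ ⟪e, y⟫_ℝ → 3 * K ≤ 48 * K / r ^ 2 * ‖y - z‖ ^ 2 := fun y hy => by
    have hyz : r / 4 ≤ ‖y - z‖ := by linarith [inner_sub_le_norm_sub he y z]
    calc 3 * K = 48 * K / r ^ 2 * (r / 4) ^ 2 := by field_simp; norm_num
      _ ≤ _ := by gcongr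
  have hT : closedBall z (r / 2) ∩ {y | 0 ≤ ⟪e, y⟫_ℝ} ⊆ halfBall e r := fun y hy => by
    refine ⟨?_, hy.2⟩
    linarith [norm_sub_norm_le y z, mem_closedBall_iff_norm.1 hy.1]
  have hΩ : ball z (r / 2) ∩ {y | 0 < ⟪e, y⟫_ℝ} ⊆ closedBall z (r / 2) ∩ {y | 0 ≤ ⟪e, y⟫_ℝ} :=
    inter_subset_inter ball_subset_closedBall (ofPred_subset_ofPred.2 fun _ => le_of_lt)
  refine (hsuper.mono fun y hy => ⟨(hT (hΩ hy)).1, hy.2⟩).le_of_le_on_diff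
    ((isCompact_closedBall z _).inter_right (isClosed_le continuous_const (by fun_prop)))
    (isOpen_ball.inter (isOpen_lt continuous_const (by fun_prop))) hΩ (hv.mono hT) (by fun_prop)
    ((strictPucciSubsolutionOn_exp z (by positivity) fun y hy => ?_).mul_sub_const
      (div_pos hM hd) _) fun y hy => ?_
  · linarith [hfar y (le_of_lt hy.2)]
  rcases (show 0 ≤ ⟪e, y⟫_ℝ from hy.1.2).eq_or_lt with hy₀ | hy₀
  · refine le_trans ?_ (hflat y (hT hy.1) hy₀.symm)
    refine mul_nonpos_of_nonneg_of_nonpos (div_pos hM hd).le (sub_nonpos.2 (Real.exp_le_exp.2 ?_))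
    linarith [hfar y hy.1.2]
  · refine le_trans (le_of_eq ?_) (hlow y ⟨(hT hy.1).1, hy₀⟩)
    have hyz : ‖y - z‖ = r / 2 := by
      rw [← dist_eq_norm]
      exact le_antisymm hy.1.1 (not_lt.1 fun hlt => hy.2 ⟨hlt, hy₀⟩)
    rw [hyz, show -(48 * K / r ^ 2) * (r / 2) ^ 2 = -(12 * K) by field_simp; norm_num,
      ← neg_sub (Real.exp (-(3 * K))), mul_neg, div_mul_cancel₀ _ hd.ne']

theorem PucciSupersolutionOn.neg_boundarySlope_mul_inner_le (he : ‖e‖ = 1) (hK : 0 < K)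
    (hr : 0 < r) (hM : 0 < M) (hv : ContinuousOn v (halfBall e r))
    (hsuper : PucciSupersolutionOn K 0 (openHalfBall e r) v)
    (hlow : ∀ x ∈ openHalfBall e r, -M ≤ v x)
    (hflat : ∀ x ∈ halfBall e r, ⟪e, x⟫_ℝ = 0 → 0 ≤ v x) :
    ∀ x ∈ halfBall e (r / 4), -(boundarySlope K * (M / r)) * ⟪e, x⟫_ℝ ≤ v x := by
  rintro x ⟨hxr, hx₀⟩
  have hxe := inner_le_norm_of_norm_eq_one he x
  have hd := exp_neg_sub_exp_neg_pos hK
  set t := ⟪e, x⟫_ℝ with ht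
  set z := hyperplaneProj e (-(r / 4)) x with hz
  have hzr : ‖z‖ < r / 2 := by
    have := norm_hyperplaneProj_le he (-(r / 4)) x
    rw [abs_neg, abs_of_pos (by positivity)] at this
    linarith
  have hxz : ‖x - z‖ = r / 4 + t := by
    rw [hz, norm_sub_hyperplaneProj he, ← ht, ← neg_add', abs_neg, abs_of_pos (by positivity)]
  have hbarrier := hsuper.exp_barrier_le he hK hr hM hv hlow hflat hzr
    (inner_hyperplaneProj he _ x) x ⟨by rw [mem_closedBall_iff_norm]; linarith, hx₀⟩
  rw [hxz] at hbarrier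
  refine le_trans ?_ hbarrier
  have hexponent : -(48 * K * (t / r)) ≤ -(48 * K / r ^ 2) * (r / 4 + t) ^ 2 - -(3 * K) := by
    have hnonneg : 0 ≤ 48 * K / r ^ 2 * (t * (r / 2 - t)) :=
      mul_nonneg (by positivity) (mul_nonneg hx₀ (by linarith))
    refine (le_add_of_nonneg_right hnonneg).trans_eq ?_
    field_simp
    ring
  have htangent := exp_mul_sub_le_exp_sub_exp (-(48 * K / r ^ 2) * (r / 4 + t) ^ 2) (-(3 * K))
  calc -(boundarySlope K * (M / r)) * t
      = M / (Real.exp (-(3 * K)) - Real.exp (-(12 * K))) *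
          (Real.exp (-(3 * K)) * -(48 * K * (t / r))) := by rw [boundarySlope]; ring
    _ ≤ _ := by
        refine mul_le_mul_of_nonneg_left (le_trans ?_ htangent) (by positivity)
        gcongr

end BoundaryLipschitz

section Hopf
open Metric
open scoped InnerProductSpace

variable {E : Type*} [NormedAddCommGroup E] [InnerProductSpace ℝ E] [FiniteDimensional ℝ E]
  {e : E} {K : ℝ}

theorem NonnegPucciSupersolutionOn.mul_inner_le_of_le_closedBall {r m : ℝ} {w : E → ℝ}
    (he : ‖e‖ = 1) (hK : 1 ≤ K) (hr : 0 < r) (hm : 0 < m)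
    (hw : NonnegPucciSupersolutionOn K (openHalfBall e (20 * r)) w)
    (hball : ∀ y ∈ closedBall ((8 * r) • e) r, m ≤ w y) :
    ∀ x ∈ openHalfBall e (r / 2), m / r * Real.exp (-(512 * K)) * ⟪e, x⟫_ℝ ≤ w x := by
  rintro x ⟨hxr, hx₀⟩
  have hxe := inner_le_norm_of_norm_eq_one he x
  set t := ⟪e, x⟫_ℝ with ht
  set z := hyperplaneProj e (8 * r) x with hz
  have hez : ⟪e, z⟫_ℝ = 8 * r := inner_hyperplaneProj he _ x
  have hxz : ‖x - z‖ = 8 * r - t := by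
    rw [hz, norm_sub_hyperplaneProj he, ← ht, abs_of_pos (by linarith)]
  have hzr : ‖z‖ ≤ ‖x‖ + 8 * r := by
    simpa only [abs_of_pos (show 0 < 8 * r by positivity)] using norm_hyperplaneProj_le he (8 * r) x
  have hρ : ∀ y ∈ closedBall z (r / 2), m ≤ w y := fun y hy => by
    refine hball y (closedBall_subset_closedBall' ?_ hy)
    rw [dist_eq_norm]
    linarith [norm_hyperplaneProj_sub_smul_le he (8 * r) x]
  -- A ball of radius `8 * r` around `z` would reach the flat boundary.
  have hbarrier := (hw.mono (closedBall_subset_openHalfBall he (R := 8 * r - t / 2)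
    (by linarith) (by linarith))).mul_exp_sub_exp_le (γ := 8 * K / r ^ 2) (half_pos hr)
    (by positivity) hm (by field_simp; norm_num) hρ x
    (by rw [mem_closedBall_iff_norm]; linarith)
  rw [hxz] at hbarrier
  refine le_trans ?_ (hbarrier.trans' (mul_le_mul_of_nonneg_left
    (exp_mul_sub_le_exp_sub_exp _ _) hm.le))
  have hexp : Real.exp (-(512 * K)) ≤ Real.exp (-(8 * K / r ^ 2) * (8 * r - t / 2) ^ 2) := by
    rw [Real.exp_le_exp, neg_mul, neg_le_neg_iff]
    calc _ ≤ 8 * K / r ^ 2 * (8 * r) ^ 2 := by gcongr <;> linarith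
      _ = 512 * K := by field_simp; norm_num
  have hexponent : t / r ≤
      -(8 * K / r ^ 2) * (8 * r - t) ^ 2 - -(8 * K / r ^ 2) * (8 * r - t / 2) ^ 2 := by
    calc t / r ≤ 8 * K / r ^ 2 * (t * r) := by field_simp; linarith
      _ ≤ 8 * K / r ^ 2 * (t * (8 * r - 3 / 4 * t)) := by gcongr; linarith
      _ = _ := by ring
  calc m / r * Real.exp (-(512 * K)) * t = m * (Real.exp (-(512 * K)) * (t / r)) := by ring
    _ ≤ _ := by gcongr

theorem exists_pos_forall_add_mul_inner_le_of_addHaar_le [MeasurableSpace E] [BorelSpace E]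
    (μ : Measure E) [μ.IsAddHaarMeasure] (he : ‖e‖ = 1) (hK : 1 ≤ K) :
    ∃ c > 0, ∀ (u : E → ℝ) (r a β : ℝ), 0 < r → 0 < β →
      ContinuousOn u (openHalfBall e (20 * r)) →
      PucciSupersolutionOn K 0 (openHalfBall e (20 * r)) u →
      (∀ x ∈ openHalfBall e (20 * r), a * ⟪e, x⟫_ℝ ≤ u x) →
      μ (closedBall ((8 * r) • e) r) ≤
        2 * μ (closedBall ((8 * r) • e) r ∩ {y | β * r ≤ u y - a * ⟪e, y⟫_ℝ}) →
      ∀ x ∈ openHalfBall e (r / 2), (a + c * β) * ⟪e, x⟫_ℝ ≤ u x := by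
  obtain ⟨c, hc, hWH⟩ := exists_pos_forall_mul_le_of_addHaar_le μ hK
  refine ⟨c * Real.exp (-(512 * K)), by positivity, fun u r a β hr hβ hcont hsuper hle hhalf => ?_⟩
  have hw : NonnegPucciSupersolutionOn K (openHalfBall e (20 * r)) fun x => u x - a * ⟪e, x⟫_ℝ := by
    refine ⟨by fun_prop, ?_, fun x hx => sub_nonneg.2 (hle x hx)⟩
    simpa only [inner_smul_left, conj_trivial, neg_mul, ← sub_eq_add_neg] using
      hsuper.add_inner ((-a) • e)
  have hball := hWH _ ((8 * r) • e) r (β * r) hr (by positivity)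
    (hw.mono (closedBall_subset_openHalfBall he
      (by rw [norm_smul, he, Real.norm_of_nonneg (by positivity)]; linarith)
      (by rw [inner_smul_self_of_norm_eq_one he]; linarith))) hhalf
  intro x hx
  have hHopf := hw.mul_inner_le_of_le_closedBall he hK hr (by positivity) hball x hx
  rw [mul_div_assoc, mul_div_cancel_right₀ _ hr.ne'] at hHopf
  linarith

end Hopf

section OscillationDecay
open Metric
open scoped InnerProductSpace

variable {E : Type*} [NormedAddCommGroup E] [InnerProductSpace ℝ E] {e : E} {K : ℝ} {u : E → ℝ}

/-- Functions `u` such that both `u` and `-u` are homogeneous `PucciSupersolutionOn`s; in dimension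
`n` and for `K = n Λ / λ` these include the members of the Pucci class `S(λ, Λ, 0)`. -/
structure PucciSolutionOn (K : ℝ) (U : Set E) (u : E → ℝ) : Prop where
  supersolution : PucciSupersolutionOn K 0 U u
  neg_supersolution : PucciSupersolutionOn K 0 U fun x => -u x

theorem PucciSolutionOn.mono {U V : Set E} (h : PucciSolutionOn K U u) (hVU : V ⊆ U) :
    PucciSolutionOn K V u :=
  ⟨h.supersolution.mono hVU, h.neg_supersolution.mono hVU⟩

/-- On the half ball of radius `r`, the function `u` lies between the linear functions with slopes
`a` and `b` in the direction `e`. -/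
def Pinched (e : E) (u : E → ℝ) (r a b : ℝ) : Prop :=
  ∀ x ∈ openHalfBall e r, a * ⟪e, x⟫_ℝ ≤ u x ∧ u x ≤ b * ⟪e, x⟫_ℝ

theorem Pinched.mono {r s a b : ℝ} (h : Pinched e u r a b) (hs : s ≤ r) : Pinched e u s a b :=
  fun x hx => h x (openHalfBall_mono e hs hx)

theorem Pinched.left_le_right {r r' a b a' b' : ℝ} (he : ‖e‖ = 1) (hr : 0 < r) (hr' : 0 < r')
    (h : Pinched e u r a b) (h' : Pinched e u r' a' b') : a ≤ b' := by
  obtain ⟨t, ht, htr⟩ := exists_between (lt_min hr hr')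
  have hle := (h _ (smul_mem_openHalfBall he ht (htr.trans_le (min_le_left _ _)))).1.trans
    (h' _ (smul_mem_openHalfBall he ht (htr.trans_le (min_le_right _ _)))).2
  rw [inner_smul_self_of_norm_eq_one he] at hle
  exact le_of_mul_le_mul_right hle ht

theorem Pinched.exists_forall_mem_Icc {r a b : ℝ} (he : ‖e‖ = 1) (hr : 0 < r)
    (h : Pinched e u r a b) :
    ∃ A, ∀ s a' b', 0 < s → Pinched e u s a' b' → A ∈ Icc a' b' := by
  obtain ⟨A, hlower, hupper⟩ := exists_between_of_forall_le
    (s := {a' | ∃ s > 0, ∃ b', Pinched e u s a' b'})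
    (t := {b' | ∃ s > 0, ∃ a', Pinched e u s a' b'})
    ⟨a, r, hr, b, h⟩ ⟨b, r, hr, a, h⟩ fun _ ⟨_, hs, _, h₁⟩ _ ⟨_, hs', _, h₂⟩ =>
      h₁.left_le_right he hs hs' h₂
  exact ⟨A, fun s a' b' hs h' => ⟨hlower ⟨s, hs, b', h'⟩, hupper ⟨s, hs, a', h'⟩⟩⟩

theorem measure_le_two_mul_or_of_subset_union {α : Type*} [MeasurableSpace α] {μ : Measure α}
    {B S T : Set α} (h : B ⊆ S ∪ T) : μ B ≤ 2 * μ S ∨ μ B ≤ 2 * μ T := by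
  have hle := (measure_mono h).trans (measure_union_le (μ := μ) S T)
  rw [two_mul, two_mul]
  rcases le_total (μ S) (μ T) with hST | hTS
  · exact .inr (hle.trans (by gcongr))
  · exact .inl (hle.trans (by gcongr))

theorem measure_le_two_mul_slope_gap_or [MeasurableSpace E] (μ : Measure E) (u : E → ℝ) {r a b : ℝ}
    (he : ‖e‖ = 1) (hr : 0 < r) (hab : a < b) :
    μ (closedBall ((8 * r) • e) r) ≤
        2 * μ (closedBall ((8 * r) • e) r ∩ {y | (b - a) * r ≤ u y - a * ⟪e, y⟫_ℝ}) ∨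
      μ (closedBall ((8 * r) • e) r) ≤
        2 * μ (closedBall ((8 * r) • e) r ∩ {y | (b - a) * r ≤ -u y - -b * ⟪e, y⟫_ℝ}) := by
  refine measure_le_two_mul_or_of_subset_union fun y hy => ?_
  rw [← inter_union_distrib_left]
  refine ⟨hy, or_iff_not_imp_left.2 fun h => ?_⟩
  have hdist := inner_sub_le_norm_sub he ((8 * r) • e) y
  rw [inner_smul_self_of_norm_eq_one he] at hdist
  rw [mem_closedBall_iff_norm'] at hy
  have := sub_pos.2 hab
  have hheight : (b - a) * (2 * r) ≤ (b - a) * ⟪e, y⟫_ℝ := by gcongr; linarith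
  have hlt : u y - a * ⟪e, y⟫_ℝ < (b - a) * r := not_le.1 h
  change (b - a) * r ≤ -u y - -b * ⟪e, y⟫_ℝ
  linarith

theorem exists_pinched_pow {σ θ r a b : ℝ} (hσ : 0 < σ) (hσ1 : σ ≤ 1) (hθ : 0 < θ) (hr : 0 < r)
    (hab : a < b) (h : Pinched e u r a b)
    (hdecay : ∀ s a b, 0 < s → s ≤ r → a < b → Pinched e u s a b →
      ∃ a' b', b' - a' = θ * (b - a) ∧ Pinched e u (σ * s) a' b') (k : ℕ) :
    ∃ a' b', b' - a' = θ ^ k * (b - a) ∧ Pinched e u (σ ^ k * r) a' b' := by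
  induction k with
  | zero => exact ⟨a, b, by ring, by simpa using h⟩
  | succ k ih =>
    obtain ⟨a', b', hwidth, hpinch⟩ := ih
    have hab' : a' < b' := by
      rw [← sub_pos, hwidth]
      exact mul_pos (pow_pos hθ k) (sub_pos.2 hab)
    obtain ⟨a'', b'', hwidth', hpinch'⟩ := hdecay _ a' b' (by positivity)
      (mul_le_of_le_one_left hr.le (pow_le_one₀ hσ.le hσ1)) hab' hpinch
    exact ⟨a'', b'', by rw [hwidth', hwidth]; ring, by rwa [pow_succ', mul_assoc]⟩

theorem exists_le_pow_and_pow_succ_le_rpow_logb {σ θ y : ℝ} (hσ : 0 < σ) (hσ1 : σ < 1) (hθ : 0 < θ)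
    (hθ1 : θ ≤ 1) (hy : 0 < y) (hy1 : y ≤ 1) :
    ∃ k : ℕ, y ≤ σ ^ k ∧ θ ^ (k + 1) ≤ y ^ Real.logb σ θ := by
  obtain ⟨k, hlt, hle⟩ := exists_nat_pow_near_of_lt_one hy hy1 hσ hσ1
  refine ⟨k, hle, ?_⟩
  calc θ ^ (k + 1) = (σ ^ (k + 1)) ^ Real.logb σ θ := by
        rw [← Real.rpow_natCast σ, ← Real.rpow_mul hσ.le, mul_comm, Real.rpow_mul hσ.le,
          Real.rpow_logb hσ hσ1.ne hθ, Real.rpow_natCast]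
    _ ≤ y ^ Real.logb σ θ :=
        Real.rpow_le_rpow (by positivity) hlt.le (Real.logb_nonneg_of_base_lt_one hσ hσ1 hθ hθ1)

theorem exists_slope_abs_sub_le_of_pinched {σ θ r a b : ℝ} (he : ‖e‖ = 1) (hσ : 0 < σ) (hσ1 : σ < 1)
    (hθ : 0 < θ) (hθ1 : θ ≤ 1) (hr : 0 < r) (hab : a < b) (h : Pinched e u r a b)
    (hdecay : ∀ s a b, 0 < s → s ≤ r → a < b → Pinched e u s a b →
      ∃ a' b', b' - a' = θ * (b - a) ∧ Pinched e u (σ * s) a' b') :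
    ∃ A ∈ Icc a b, ∀ x ∈ openHalfBall e (r / 2),
      |u x - A * ⟪e, x⟫_ℝ| ≤ (b - a) / θ * (2 * ‖x‖ / r) ^ Real.logb σ θ * ‖x‖ := by
  obtain ⟨A, hA⟩ := h.exists_forall_mem_Icc he hr
  refine ⟨A, hA r a b hr h, fun x hx => ?_⟩
  have hxe := inner_le_norm_of_norm_eq_one he x
  have hx₀ : 0 < ‖x‖ := hx.2.trans_le hxe
  obtain ⟨k, hyk, hθk⟩ := exists_le_pow_and_pow_succ_le_rpow_logb (y := 2 * ‖x‖ / r) hσ hσ1 hθ hθ1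
    (by positivity) (by rw [div_le_one hr]; linarith [hx.1])
  obtain ⟨a', b', hwidth, hpinch⟩ := exists_pinched_pow hσ hσ1.le hθ hr hab h hdecay k
  obtain ⟨haA, hAb⟩ := hA _ a' b' (by positivity) hpinch
  rw [div_le_iff₀ hr] at hyk
  obtain ⟨hlower, hupper⟩ := hpinch x ⟨by linarith, hx.2⟩
  have hlowerA := mul_le_mul_of_nonneg_right haA hx.2.le
  have hupperA := mul_le_mul_of_nonneg_right hAb hx.2.le
  have hab' := sub_pos.2 hab
  calc |u x - A * ⟪e, x⟫_ℝ| ≤ (b' - a') * ⟪e, x⟫_ℝ := abs_sub_le_iff.2 ⟨by linarith, by linarith⟩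
    _ = (b - a) / θ * θ ^ (k + 1) * ⟪e, x⟫_ℝ := by rw [hwidth, pow_succ]; field_simp
    _ ≤ _ := by
        have := hx.2.le
        gcongr

theorem abs_sub_mul_inner_le_of_near {A L M α : ℝ} (he : ‖e‖ = 1) (hα1 : α ≤ 1) (hL : 0 ≤ L)
    (hM : 0 ≤ M) (hA : |A| ≤ L * M) (hbound : ∀ x ∈ openHalfBall e 1, |u x| ≤ M)
    (hnear : ∀ x ∈ openHalfBall e (1 / 8),
      |u x - A * ⟪e, x⟫_ℝ| ≤ 4 * L * M * (8 * ‖x‖) ^ α * ‖x‖) :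
    ∀ x ∈ openHalfBall e 1, |u x - A * ⟪e, x⟫_ℝ| ≤ 64 * (1 + L) * ‖x‖ ^ (1 + α) * M := by
  intro x hx
  have hxe := inner_le_norm_of_norm_eq_one he x
  have hx₀ : 0 < ‖x‖ := hx.2.trans_le hxe
  rcases lt_or_ge ‖x‖ (1 / 8) with hlt | hge
  · have h8 : (8 : ℝ) ^ α ≤ 8 := by
      simpa only [Real.rpow_one] using Real.rpow_le_rpow_of_exponent_le (by norm_num) hα1
    calc |u x - A * ⟪e, x⟫_ℝ| ≤ 4 * L * M * (8 * ‖x‖) ^ α * ‖x‖ := hnear x ⟨hlt, hx.2⟩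
      _ = 4 * L * 8 ^ α * ‖x‖ ^ (1 + α) * M := by
          rw [Real.mul_rpow (by norm_num) hx₀.le, Real.rpow_add hx₀, Real.rpow_one]
          ring
      _ ≤ 64 * (1 + L) * ‖x‖ ^ (1 + α) * M := by
          gcongr ?_ * _ * _
          linarith [mul_le_mul_of_nonneg_left h8 hL]
  · have hrpow : 1 ≤ 64 * ‖x‖ ^ (1 + α) := by
      calc (1 : ℝ) = 64 * (1 / 8) ^ 2 := by norm_num
        _ ≤ 64 * ‖x‖ ^ 2 := by gcongr
        _ ≤ 64 * ‖x‖ ^ (1 + α) := by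
            rw [← Real.rpow_two]
            gcongr 64 * ?_
            exact Real.rpow_le_rpow_of_exponent_ge hx₀ hx.1.le (by linarith)
    calc |u x - A * ⟪e, x⟫_ℝ| ≤ |u x| + |A| * ⟪e, x⟫_ℝ := by
          simpa only [abs_mul, abs_of_pos hx.2] using abs_sub (u x) (A * ⟪e, x⟫_ℝ)
      _ ≤ M + L * M * 1 := by
          gcongr
          · exact hbound x hx
          · exact hx.2.le
          · exact hxe.trans hx.1.le
      _ = 1 * ((1 + L) * M) := by ring
      _ ≤ 64 * ‖x‖ ^ (1 + α) * ((1 + L) * M) := by gcongr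
      _ = 64 * (1 + L) * ‖x‖ ^ (1 + α) * M := by ring

end OscillationDecay

section BoundarySlope
open Metric
open scoped InnerProductSpace

variable {E : Type*} [NormedAddCommGroup E] [InnerProductSpace ℝ E] [FiniteDimensional ℝ E]
  {e : E} {K : ℝ} {u : E → ℝ}

theorem exists_pinched_decay (he : ‖e‖ = 1) (hK : 1 ≤ K) :
    ∃ c > 0, c ≤ 1 / 2 ∧ ∀ (u : E → ℝ) (r a b : ℝ), 0 < r → a < b →
      ContinuousOn u (openHalfBall e r) → PucciSolutionOn K (openHalfBall e r) u →
      Pinched e u r a b →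
      ∃ a' b', b' - a' = (1 - c) * (b - a) ∧ Pinched e u (1 / 40 * r) a' b' := by
  borelize E
  obtain ⟨c, hc, hHopf⟩ := exists_pos_forall_add_mul_inner_le_of_addHaar_le volume he hK
  refine ⟨min c (1 / 2), by positivity, min_le_right _ _, fun u r a b hr hab hcont hu hpinch => ?_⟩
  have hab' := sub_pos.2 hab
  have hr20 : 20 * (r / 20) = r := mul_div_cancel₀ r (by norm_num)
  have hr40 : r / 20 / 2 = 1 / 40 * r := by ring
  have hsmall := hpinch.mono (show 1 / 40 * r ≤ r by linarith)
  have hmin : min c (1 / 2) * (b - a) ≤ c * (b - a) := by gcongr; exact min_le_left _ _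
  rcases measure_le_two_mul_slope_gap_or volume u he (r := r / 20) (by positivity) hab with
    hhalf | hhalf
  · refine ⟨a + min c (1 / 2) * (b - a), b, by ring, fun x hx => ⟨?_, (hsmall x hx).2⟩⟩
    refine le_trans ?_ (hHopf u (r / 20) a (b - a) (by positivity) hab' (by rwa [hr20])
      (by rw [hr20]; exact hu.supersolution) (by rw [hr20]; exact fun x hx => (hpinch x hx).1)
      hhalf x (by rwa [hr40]))
    have := hx.2
    gcongr
  · refine ⟨a, b - min c (1 / 2) * (b - a), by ring, fun x hx => ⟨(hsmall x hx).1, ?_⟩⟩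
    have hupper := hHopf (fun x => -u x) (r / 20) (-b) (b - a) (by positivity) hab'
      (by rw [hr20]; exact hcont.neg) (by rw [hr20]; exact hu.neg_supersolution)
      (by rw [hr20]; exact fun x hx => by linarith [(hpinch x hx).2]) hhalf x (by rwa [hr40])
    have := mul_le_mul_of_nonneg_right hmin hx.2.le
    linarith

theorem PucciSolutionOn.pinched_boundarySlope {r M : ℝ} (he : ‖e‖ = 1) (hK : 0 < K) (hr : 0 < r)
    (hM : 0 < M) (hcont : ContinuousOn u (halfBall e r))
    (hu : PucciSolutionOn K (openHalfBall e r) u) (hbound : ∀ x ∈ openHalfBall e r, |u x| ≤ M)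
    (hflat : ∀ x ∈ halfBall e r, ⟪e, x⟫_ℝ = 0 → u x = 0) :
    Pinched e u (r / 4) (-(boundarySlope K * (M / r))) (boundarySlope K * (M / r)) := by
  intro x hx
  have hx' := openHalfBall_subset_halfBall e _ hx
  have hlower := hu.supersolution.neg_boundarySlope_mul_inner_le he hK hr hM hcont
    (fun y hy => (abs_le.1 (hbound y hy)).1) (fun y hy hy₀ => (hflat y hy hy₀).ge) x hx'
  have hupper := hu.neg_supersolution.neg_boundarySlope_mul_inner_le he hK hr hM hcont.neg
    (fun y hy => neg_le_neg (abs_le.1 (hbound y hy)).2)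
    (fun y hy hy₀ => (neg_eq_zero.2 (hflat y hy hy₀)).ge) x hx'
  exact ⟨hlower, by linarith [show (-u) x = -u x from rfl]⟩

theorem exists_boundary_slope (he : ‖e‖ = 1) (hK : 1 ≤ K) :
    ∃ α C : ℝ, 0 < α ∧ α < 1 ∧ 0 < C ∧ ∀ (u : E → ℝ) (M : ℝ), ContinuousOn u (halfBall e 1) →
      PucciSolutionOn K (openHalfBall e 1) u → (∀ x ∈ openHalfBall e 1, |u x| ≤ M) →
      (∀ x ∈ halfBall e 1, ⟪e, x⟫_ℝ = 0 → u x = 0) →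
      ∃ A, |A| ≤ C * M ∧
        ∀ x ∈ openHalfBall e 1, |u x - A * ⟪e, x⟫_ℝ| ≤ C * ‖x‖ ^ (1 + α) * M := by
  obtain ⟨c, hc, hc2, hdecay⟩ := exists_pinched_decay he hK
  have hθ : 1 / 2 ≤ 1 - c := by linarith
  have hα : 0 < Real.logb (1 / 40) (1 - c) :=
    Real.logb_pos_of_base_lt_one (by norm_num) (by norm_num) (by linarith) (by linarith)
  have hα1 : Real.logb (1 / 40) (1 - c) < 1 := by
    rw [Real.logb_lt_iff_lt_rpow_of_base_lt_one (by norm_num) (by norm_num) (by linarith),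
      Real.rpow_one]
    linarith
  have hL := boundarySlope_pos (zero_lt_one.trans_le hK)
  refine ⟨_, 64 * (1 + boundarySlope K), hα, hα1, by positivity,
    fun u M hcont hu hbound hflat => ?_⟩
  have hM : 0 ≤ M := (abs_nonneg _).trans
    (hbound _ (smul_mem_openHalfBall he one_half_pos one_half_lt_one))
  rcases hM.eq_or_lt with rfl | hM
  · exact ⟨0, by simp, by simpa using hbound⟩
  have hpinch := hu.pinched_boundarySlope he (by positivity) one_pos hM hcont hbound hflat
  obtain ⟨A, hA, hnear⟩ := exists_slope_abs_sub_le_of_pinched (σ := 1 / 40) (θ := 1 - c) he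
    (by norm_num) (by norm_num) (by linarith) (by linarith) (by norm_num)
    (neg_lt_self (by positivity)) hpinch fun s a b hs hs4 hab h =>
      have hs1 := openHalfBall_mono e (show s ≤ 1 by linarith)
      hdecay u s a b hs hab
        (hcont.mono (hs1.trans (openHalfBall_subset_halfBall e 1))) (hu.mono hs1) h
  rw [div_one] at hA hnear
  have hA' : |A| ≤ boundarySlope K * M := abs_le.2 hA
  refine ⟨A, hA'.trans (by gcongr; linarith), abs_sub_mul_inner_le_of_near he hα1.le hL.le
    hM.le hA' hbound fun x hx => ?_⟩
  refine (hnear x (by rwa [show (1 / 4 / 2 : ℝ) = 1 / 8 by norm_num])).trans ?_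
  rw [show 2 * ‖x‖ / (1 / 4) = 8 * ‖x‖ by ring]
  gcongr
  rw [div_le_iff₀ (by linarith)]
  have := mul_le_mul_of_nonneg_left hθ (show 0 ≤ 4 * boundarySlope K * M by positivity)
  linarith

end BoundarySlope

section QuadraticDerivatives
open scoped InnerProductSpace

variable {E : Type*} [NormedAddCommGroup E] [InnerProductSpace ℝ E]

theorem contDiff_quadratic (p e x : E) (d : ℝ) :
    ContDiff ℝ 2 fun y => ⟪p, y - x⟫_ℝ + ⟪e, y - x⟫_ℝ ^ 2 - d * ‖y - x‖ ^ 2 := by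
  have hsub : ContDiff ℝ 2 fun y => y - x := contDiff_id.sub contDiff_const
  exact ((contDiff_const.inner ℝ hsub).add ((contDiff_const.inner ℝ hsub).pow 2)).sub
    (contDiff_const.mul (hsub.norm_sq ℝ))

theorem hasFDerivAt_inner_sub (p x y : E) :
    HasFDerivAt (fun y => ⟪p, y - x⟫_ℝ) (innerSL ℝ p) y :=
  (innerSL ℝ p).hasFDerivAt.comp y ((hasFDerivAt_id y).sub_const x)

theorem fderiv_quadratic (p e x : E) (d : ℝ) :
    fderiv ℝ (fun y => ⟪p, y - x⟫_ℝ + ⟪e, y - x⟫_ℝ ^ 2 - d * ‖y - x‖ ^ 2) =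
      fun y => innerSL ℝ p + ⟪e, y - x⟫_ℝ • (2 : ℝ) • innerSL ℝ e -
        (2 * d) • innerSL ℝ (y - x) := by
  funext y
  have hderiv := ((hasFDerivAt_inner_sub p x y).add ((hasFDerivAt_inner_sub e x y).pow 2)).sub
    (((hasFDerivAt_id y).sub_const x).norm_sq.const_mul d)
  refine (hderiv.congr_fderiv ?_).fderiv
  ext v
  simp only [Nat.add_one_sub_one, pow_one, nsmul_eq_mul, Nat.cast_ofNat, id_eq, map_sub,
    ContinuousLinearMap.comp_id, sub_apply, add_apply, coe_innerSL_apply, smul_apply, smul_eq_mul]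
  ring

theorem fderiv_fderiv_quadratic_apply (p e x v w : E) (d : ℝ) :
    fderiv ℝ (fderiv ℝ fun y => ⟪p, y - x⟫_ℝ + ⟪e, y - x⟫_ℝ ^ 2 - d * ‖y - x‖ ^ 2) x v w =
      2 * (⟪e, v⟫_ℝ * ⟪e, w⟫_ℝ) - 2 * d * ⟪v, w⟫_ℝ := by
  have hinner : HasFDerivAt (fun y => innerSL ℝ (y - x)) (innerSL ℝ : E →L[ℝ] E →L[ℝ] ℝ) x :=
    (innerSL ℝ : E →L[ℝ] E →L[ℝ] ℝ).hasFDerivAt.comp x ((hasFDerivAt_id x).sub_const x)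
  have hderiv := (((hasFDerivAt_inner_sub e x x).smul_const ((2 : ℝ) • innerSL ℝ e)).const_add
    (innerSL ℝ p)).fun_sub (hinner.fun_const_smul (2 * d))
  have hcoe : (innerSL ℝ : E →L[ℝ] E →L[ℝ] ℝ) v w = ⟪v, w⟫_ℝ := rfl
  rw [fderiv_quadratic, hderiv.fderiv]
  simp only [sub_apply, ContinuousLinearMap.smulRight_apply, coe_innerSL_apply, smul_apply,
    smul_eq_mul, hcoe]
  ring

end QuadraticDerivatives

section PucciClass
open Filter Topology
open scoped InnerProductSpace

variable {n : ℕ} {lam Lam : ℝ} {A : Matrix (Fin n) (Fin n) ℝ} {U : Set (EucSp n)}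
  {u : EucSp n → ℝ}

theorem hessianMatrix_quadratic (p e x : EucSp n) (d : ℝ) :
    hessianMatrix n (fun y => ⟪p, y - x⟫_ℝ + ⟪e, y - x⟫_ℝ ^ 2 - d * ‖y - x‖ ^ 2) x =
      (2 : ℝ) • Matrix.vecMulVec e.ofLp e.ofLp - (2 * d) • 1 := by
  ext i j
  rw [hessianMatrix, Matrix.of_apply, iteratedFDeriv_two_apply, Matrix.cons_val_zero,
    Matrix.cons_val_one, fderiv_fderiv_quadratic_apply]
  simp [Matrix.vecMulVec_apply, Matrix.one_apply, EuclideanSpace.inner_single_right, eq_comm]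

theorem hessianMatrix_neg (φ : EucSp n → ℝ) (x : EucSp n) :
    hessianMatrix n (fun y => -φ y) x = -hessianMatrix n φ x := by
  ext i j
  simp only [hessianMatrix, Matrix.of_apply, Matrix.neg_apply]
  exact congr($(iteratedFDeriv_neg_apply (f := φ)) _)

theorem IsElliptic.mul_norm_sq_le_dotProduct (hA : IsElliptic n lam Lam A) (e : EucSp n) :
    lam * ‖e‖ ^ 2 ≤ e.ofLp ⬝ᵥ A.mulVec e.ofLp := by
  have hpos := hA.2.1.dotProduct_mulVec_nonneg e.ofLp
  have hnorm : ‖e‖ ^ 2 = e.ofLp ⬝ᵥ e.ofLp := by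
    simp only [EuclideanSpace.real_norm_sq_eq, dotProduct, ← sq]
  rw [star_trivial, Matrix.sub_mulVec, dotProduct_sub, Matrix.smul_mulVec, Matrix.one_mulVec,
    dotProduct_smul, smul_eq_mul, ← hnorm] at hpos
  linarith

theorem IsElliptic.trace_le (hA : IsElliptic n lam Lam A) : A.trace ≤ n * Lam := by
  have hpos := hA.2.2.trace_nonneg
  rw [Matrix.trace_sub, Matrix.trace_smul, Matrix.trace_one, Fintype.card_fin, smul_eq_mul] at hpos
  linarith

theorem IsElliptic.le_trace_mul_quadratic (hA : IsElliptic n lam Lam A) (e : EucSp n) {d : ℝ}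
    (hd : 0 ≤ d) :
    2 * (lam * ‖e‖ ^ 2 - d * (n * Lam)) ≤
      (A * ((2 : ℝ) • Matrix.vecMulVec e.ofLp e.ofLp - (2 * d) • 1)).trace := by
  rw [mul_sub A, Matrix.trace_sub, mul_smul_comm, mul_smul_comm, Matrix.trace_smul,
    Matrix.trace_smul, mul_one, Matrix.mul_vecMulVec, Matrix.trace_vecMulVec, dotProduct_comm,
    smul_eq_mul, smul_eq_mul]
  linarith [hA.mul_norm_sq_le_dotProduct e, mul_le_mul_of_nonneg_left hA.trace_le hd]

theorem InPucciStar.neg {f : EucSp n → ℝ} (h : InPucciStar n lam Lam f U u) :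
    InPucciStar n lam Lam f U fun x => -u x := by
  intro φ hφ
  have hneg := h (fun y => -φ y) hφ.neg
  simp only [hessianMatrix_neg, mul_neg, Matrix.trace_neg, sub_neg_eq_add, neg_le_neg_iff] at hneg
  refine ⟨fun x hx hmax => ?_, fun x hx hmin => ?_⟩
  · obtain ⟨A, hA, hle⟩ := hneg.2 x hx (by simpa [add_comm] using hmax.neg)
    exact ⟨A, hA, by linarith⟩
  · obtain ⟨A, hA, hle⟩ := hneg.1 x hx (by simpa [add_comm] using hmin.neg)
    exact ⟨A, hA, by linarith⟩

theorem InPucciStar.pucciSupersolutionOn (hlam : 0 < lam) (h : InPucciStar n lam Lam 0 U u) :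
    PucciSupersolutionOn (n * Lam / lam) 0 U u := by
  intro x hx p e d hd hjet
  have hmin : IsLocalMinOn
      (fun y => u y - (⟪p, y - x⟫_ℝ + ⟪e, y - x⟫_ℝ ^ 2 - d * ‖y - x‖ ^ 2)) U x := by
    refine Eventually.filter_mono nhdsWithin_le_nhds (hjet.mono fun y hy => ?_)
    simp only [sub_self, inner_zero_right, norm_zero]
    linarith
  obtain ⟨A, hA, htrace⟩ := (h _ (contDiff_quadratic p e x d)).2 x hx hmin
  rw [hessianMatrix_quadratic, Pi.zero_apply, abs_zero] at htrace
  rw [add_zero, div_mul_eq_mul_div, le_div_iff₀ hlam]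
  linarith [hA.le_trace_mul_quadratic e hd]

theorem InPucciStar.pucciSolutionOn (hlam : 0 < lam) (h : InPucciStar n lam Lam 0 U u) :
    PucciSolutionOn (n * Lam / lam) U u :=
  ⟨h.pucciSupersolutionOn hlam, h.neg.pucciSupersolutionOn hlam⟩

end PucciClass

section UpperHalfBall
open Filter Topology
open scoped InnerProductSpace

variable {n : ℕ}

theorem norm_lastBasis (hn : 0 < n) : ‖lastBasis n‖ = 1 := by
  rw [lastBasis, dif_pos hn, PiLp.norm_single, norm_one]

theorem lastCoord_eq_inner (n : ℕ) (x : EucSp n) : lastCoord n x = ⟪lastBasis n, x⟫_ℝ := by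
  by_cases hn : 0 < n
  · rw [lastBasis, dif_pos hn, lastCoord, dif_pos hn, EuclideanSpace.inner_single_left, map_one,
      one_mul]
  · rw [lastBasis, dif_neg hn, lastCoord, dif_neg hn, inner_zero_left]

theorem openHalfBall_lastBasis (n : ℕ) (r : ℝ) :
    openHalfBall (lastBasis n) r = upperHalfBall n r := by
  ext x
  simp only [openHalfBall, upperHalfBall, mem_ofPred_eq, mem_ball_zero_iff, lastCoord_eq_inner]

theorem halfBall_lastBasis (n : ℕ) (r : ℝ) :
    halfBall (lastBasis n) r = upperHalfBall n r ∪ flatPart n r := by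
  ext x
  simp only [halfBall, upperHalfBall, flatPart, mem_union, mem_ofPred_eq, mem_ball_zero_iff,
    lastCoord_eq_inner, ← and_or_left, le_iff_lt_or_eq, eq_comm]

theorem halfBall_subset_closure_openHalfBall {E : Type*} [NormedAddCommGroup E]
    [InnerProductSpace ℝ E] {e : E} (he : ‖e‖ = 1) (r : ℝ) :
    halfBall e r ⊆ closure (openHalfBall e r) := by
  intro x hx
  have htendsto : Tendsto (fun t : ℝ => x + t • e) (𝓝[>] 0) (𝓝 x) := by
    have hcont : Continuous fun t : ℝ => x + t • e := by fun_prop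
    simpa only [zero_smul, add_zero] using (hcont.tendsto 0).mono_left nhdsWithin_le_nhds
  refine mem_closure_of_tendsto htendsto ?_
  filter_upwards [htendsto.norm.eventually (gt_mem_nhds hx.1), self_mem_nhdsWithin] with t hlt ht
  refine ⟨hlt, ?_⟩
  rw [inner_add_right, inner_smul_self_of_norm_eq_one he]
  exact add_pos_of_nonneg_of_pos hx.2 ht

end UpperHalfBall

theorem stmt_4_general {n : ℕ} (hn : 0 < n) (lam Lam : ℝ) (hlam : 0 < lam) (hLam : lam ≤ Lam) :
    ∃ α₁ C : ℝ, 0 < α₁ ∧ α₁ < 1 ∧ 0 < C ∧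
      ∀ u : EucSp n → ℝ,
        BddAbove ((fun x => |u x|) '' upperHalfBall n 1) →
        ContinuousOn u (upperHalfBall n 1 ∪ flatPart n 1) →
        InPucciStar n lam Lam 0 (upperHalfBall n 1) u →
        (∀ x ∈ flatPart n 1, u x = 0) →
        ∃ a : ℝ,
          |a| ≤ C * sSup ((fun x => |u x|) '' upperHalfBall n 1) ∧
          ∀ x ∈ upperHalfBall n 1,
            |u x - a * lastCoord n x| ≤
              C * ‖x‖ ^ (1 + α₁) * sSup ((fun x => |u x|) '' upperHalfBall n 1) := by
  have hK : 1 ≤ n * Lam / lam := by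
    rw [one_le_div hlam]
    exact hLam.trans (le_mul_of_one_le_left (hlam.le.trans hLam) (mod_cast hn))
  obtain ⟨α₁, C, hα₀, hα₁, hC, hslope⟩ := exists_boundary_slope (norm_lastBasis hn) hK
  simp only [openHalfBall_lastBasis, halfBall_lastBasis, ← lastCoord_eq_inner] at hslope
  refine ⟨α₁, C, hα₀, hα₁, hC, fun u hbdd hcont hu hflat => ?_⟩
  refine hslope u _ hcont (hu.pucciSolutionOn hlam)
    (fun x hx => le_csSup hbdd (mem_image_of_mem _ hx)) fun x hx hx₀ => hflat x ?_
  exact hx.resolve_left fun hpos => hpos.2.ne' hx₀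

/-- Lemma 2.2: pointwise boundary `C^{1,α₁}` regularity at a flat boundary. There exist
`α₁ ∈ (0,1)` and `C > 0` depending only on `n, λ, Λ` such that if `u ∈ S(λ,Λ,0)` in `B₁⁺`
is bounded, continuous up to the boundary and vanishes on `T₁`, then there is `a` with
`|a| ≤ C‖u‖_{L^∞(B₁⁺)}` and `|u(x) − a xₙ| ≤ C|x|^{1+α₁}‖u‖_{L^∞(B₁⁺)}` in `B₁⁺`. -/
theorem stmt_4 {n : ℕ} (hn : 2 ≤ n) (lam Lam : ℝ) (hlam : 0 < lam) (hLam : lam ≤ Lam) :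
    ∃ α₁ C : ℝ, 0 < α₁ ∧ α₁ < 1 ∧ 0 < C ∧
      ∀ u : EucSp n → ℝ,
        (∃ M : ℝ, ∀ x ∈ closure (upperHalfBall n 1), |u x| ≤ M) →
        ContinuousOn u (closure (upperHalfBall n 1)) →
        InPucciStar n lam Lam 0 (upperHalfBall n 1) u →
        (∀ x ∈ flatPart n 1, u x = 0) →
        ∃ a : ℝ,
          |a| ≤ C * sSup ((fun x => |u x|) '' upperHalfBall n 1) ∧
          ∀ x ∈ upperHalfBall n 1,
            |u x - a * lastCoord n x| ≤
              C * ‖x‖ ^ (1 + α₁) * sSup ((fun x => |u x|) '' upperHalfBall n 1) := by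
  have hn₀ : 0 < n := two_pos.trans_le hn
  obtain ⟨α₁, C, hα₀, hα₁, hC, h⟩ := stmt_4_general hn₀ lam Lam hlam hLam
  refine ⟨α₁, C, hα₀, hα₁, hC, fun u ⟨M, hM⟩ hcont => h u ⟨M, ?_⟩ (hcont.mono ?_)⟩
  · exact forall_mem_image.2 fun x hx => hM x (subset_closure hx)
  · rw [← halfBall_lastBasis, ← openHalfBall_lastBasis]
    exact halfBall_subset_closure_openHalfBall (norm_lastBasis hn₀) 1
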